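/- arXiv:1509.05739 — 5 statements merged into one kernel-verified Lean document; each statement's English description precedes it below -/
import Mathlib

section
/- Let n be a prime, m a divisor of n−1, A the unique subgroup of order m of (ℤ/nℤ)ˣ, ω = e^{2πi/n}, and κ := (n−1)/m. Then the coherence of the harmonic frame, namely μ := max over nonzero residues ℓ modulo n of (1/m)|Σ_{a ∈ A} ω^{ℓ a}|, satisfies μ ≤ (1/κ)·((κ−1)·√((1/m)(κ + 1/m)) + 1/m). -/
/-- `∑_{a ∈ A} ω^(ℓ·a)` with `ω = e^{2πi/n}`, for `A ≤ (ℤ/nℤ)ˣ` and `ℓ` a nonzero residue. -/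
noncomputable def harmonicSum (n : ℕ) [NeZero n] (A : Subgroup (ZMod n)ˣ) [Fintype A]
    (ℓ : (ZMod n)ˣ) : ℂ :=
  ∑ a : A, Complex.exp (2 * Real.pi * Complex.I / n) ^
      (((ℓ * (a : (ZMod n)ˣ) : (ZMod n)ˣ) : ZMod n)).val

/-!
Averaging the multiplicative characters trivial on `A` gives the indicator function of `A`, so the
sum of an additive character over `A` is the average of the Gauss sums of these `κ` characters.
The trivial one has Gauss sum `-1` and the `κ - 1` others have Gauss sums of absolute value `√q`,
where `q` is the size of the field; the bound is the triangle inequality.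
-/

/-- The Gaussian period `∑_{a ∈ A} ψ a` of an additive character `ψ` over a subgroup `A` of the
unit group. The periods `∑_{a ∈ A} ψ (ℓ * a)` of the cosets `ℓA` are those of `ψ.mulShift ℓ` over
`A`. -/
def gaussianPeriod {R R' : Type*} [CommRing R] [CommRing R'] (ψ : AddChar R R')
    (A : Subgroup Rˣ) [Fintype A] : R' :=
  ∑ a : A, ψ (a : Rˣ)

section Annihilator

variable {M : Type*} (R : Type*) [CommMonoid M] [Finite M] [CommRing R]
  [HasEnoughRootsOfUnity R (Monoid.exponent Mˣ)]

/-- The annihilator of a subgroup `A` of `Mˣ`: the group of the multiplicative characters of `M`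
that are trivial on `A`. -/
noncomputable abbrev mulCharAnnihilator (A : Subgroup Mˣ) : Subgroup (MulChar M R) :=
  (MulChar.subgroupOrderIsoSubgroupMulChar M R A).ofDual

lemma card_mulCharAnnihilator (A : Subgroup Mˣ) :
    Nat.card (mulCharAnnihilator R A) = A.index :=
  MulChar.card_subgroupOrderIsoSubgroupMulChar

variable {R}

lemma mem_iff_forall_mulCharAnnihilator {A : Subgroup Mˣ} {x : Mˣ} :
    x ∈ A ↔ ∀ χ ∈ mulCharAnnihilator R A, χ x = 1 := by
  simp only [← MulChar.mem_subgroupOrderIsoSubgroupMulChar_symm_iff, OrderDual.toDual_ofDual,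
    OrderIso.symm_apply_apply]

lemma sum_mulCharAnnihilator_apply [IsDomain R] (A : Subgroup Mˣ) [DecidablePred (· ∈ A)]
    [Fintype (mulCharAnnihilator R A)] (x : Mˣ) :
    ∑ χ : mulCharAnnihilator R A, χ.1 x = if x ∈ A then (A.index : R) else 0 := by
  let evalAt : mulCharAnnihilator R A →* R :=
    ((MulChar.mulCharEquiv M R).symm x).toMonoidHom.comp (mulCharAnnihilator R A).subtype
  have evalAt_apply (χ : mulCharAnnihilator R A) : evalAt χ = χ.1 x :=
    MulChar.mulCharEquiv_symm_apply_apply x χ.1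
  have evalAt_eq_one : evalAt = 1 ↔ x ∈ A := by
    simp only [mem_iff_forall_mulCharAnnihilator (R := R), DFunLike.ext_iff, Subtype.forall,
      evalAt_apply, MonoidHom.one_apply]
  classical
  simp only [← evalAt_apply, sum_hom_units, evalAt_eq_one, ← Nat.card_eq_fintype_card,
    card_mulCharAnnihilator, Nat.cast_ite, Nat.cast_zero]

end Annihilator

lemma gaussSum_eq_sum_units {R R' : Type*} [CommRing R] [Fintype R] [Fintype Rˣ] [CommRing R']
    (χ : MulChar R R') (ψ : AddChar R R') : gaussSum χ ψ = ∑ u : Rˣ, χ u * ψ u := by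
  refine (Fintype.sum_of_injective _ Units.val_injective _ _ (fun x hx ↦ ?_) fun _ ↦ rfl).symm
  rw [χ.map_nonunit hx, zero_mul]

theorem index_mul_gaussianPeriod {R R' : Type*} [CommRing R] [Fintype R] [CommRing R'] [IsDomain R']
    [HasEnoughRootsOfUnity R' (Monoid.exponent Rˣ)] (ψ : AddChar R R') (A : Subgroup Rˣ)
    [Fintype A] [Fintype (mulCharAnnihilator R' A)] :
    A.index * gaussianPeriod ψ A = ∑ χ : mulCharAnnihilator R' A, gaussSum χ.1 ψ := by
  classical
  calc A.index * gaussianPeriod ψ A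
    _ = ∑ u : Rˣ, if u ∈ A then A.index * ψ u else 0 := by
      rw [gaussianPeriod, Finset.mul_sum, ← Finset.sum_filter]
      exact (Finset.sum_subtype _ (fun _ ↦ Finset.mem_filter_univ _)
        fun u : Rˣ ↦ A.index * ψ u).symm
    _ = ∑ u : Rˣ, (∑ χ : mulCharAnnihilator R' A, χ.1 u) * ψ u := by
      simp only [sum_mulCharAnnihilator_apply, ite_mul, zero_mul]
    _ = ∑ χ : mulCharAnnihilator R' A, ∑ u : Rˣ, χ.1 u * ψ u := by
      simp only [Finset.sum_mul]
      exact Finset.sum_comm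
    _ = ∑ χ : mulCharAnnihilator R' A, gaussSum χ.1 ψ := by
      simp only [gaussSum_eq_sum_units]

section FiniteField

variable {F : Type*} [Field F] [Fintype F] {ψ : AddChar F ℂ}

lemma norm_gaussSum {χ : MulChar F ℂ} (hχ : χ ≠ 1) (hψ : ψ ≠ 1) :
    ‖gaussSum χ ψ‖ = √(Fintype.card F) := by
  have hmul : gaussSum χ ψ * star (gaussSum χ ψ) = Fintype.card F := by
    rw [star_gaussSum_eq, gaussSum_mul_gaussSum_eq_card hχ (.of_ne_one hψ)]
  rw [eq_comm, Real.sqrt_eq_iff_eq_sq (Nat.cast_nonneg _) (norm_nonneg _),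
    ← RCLike.ofReal_inj (K := ℂ)]
  simpa [RCLike.mul_conj, eq_comm] using hmul

theorem index_mul_norm_gaussianPeriod_le (hψ : ψ ≠ 1) (A : Subgroup Fˣ) [Fintype A] :
    A.index * ‖gaussianPeriod ψ A‖ ≤ (A.index - 1) * √(Fintype.card F) + 1 := by
  classical
  have := Fintype.ofFinite (mulCharAnnihilator ℂ A)
  have hcard : ((Finset.univ.erase (1 : mulCharAnnihilator ℂ A)).card : ℝ) = A.index - 1 := by
    rw [Finset.cast_card_erase_of_mem (Finset.mem_univ _), Finset.card_univ,
      ← Nat.card_eq_fintype_card, card_mulCharAnnihilator]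
  have hnorm : ∀ χ ∈ Finset.univ.erase (1 : mulCharAnnihilator ℂ A),
      ‖gaussSum χ.1 ψ‖ = √(Fintype.card F) := fun χ hχ ↦
    norm_gaussSum (by simpa using Finset.ne_of_mem_erase hχ) hψ
  calc A.index * ‖gaussianPeriod ψ A‖
    _ = ‖∑ χ : mulCharAnnihilator ℂ A, gaussSum χ.1 ψ‖ := by
      rw [← index_mul_gaussianPeriod, norm_mul, Complex.norm_natCast]
    _ ≤ ∑ χ : mulCharAnnihilator ℂ A, ‖gaussSum χ.1 ψ‖ := norm_sum_le _ _
    _ = (A.index - 1) * √(Fintype.card F) + 1 := by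
      rw [← Finset.sum_erase_add _ _ (Finset.mem_univ 1), Finset.sum_congr rfl hnorm,
        Finset.sum_const, nsmul_eq_mul, hcard, Subgroup.coe_one, gaussSum_one_left hψ, norm_neg,
        norm_one]

theorem harmonic_frame_coherence_bound_general {m κ : ℕ} (hκ : m * κ = Fintype.card F - 1)
    (hψ : ψ ≠ 1) (A : Subgroup Fˣ) [Fintype A] (hA : Nat.card A = m) :
    (1 / (m : ℝ)) * ‖gaussianPeriod ψ A‖ ≤
      (1 / (κ : ℝ)) * (((κ : ℝ) - 1) *
        √((1 / (m : ℝ)) * ((κ : ℝ) + 1 / (m : ℝ))) + 1 / (m : ℝ)) := by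
  have hm : 0 < m := hA ▸ Nat.card_pos
  have hindex : A.index = κ := by
    refine Nat.eq_of_mul_eq_mul_left hm ?_
    rw [hκ, ← hA, A.card_mul_index, Nat.card_units, Nat.card_eq_fintype_card]
  have hκ0 : 0 < κ := hindex ▸ Nat.pos_of_ne_zero A.index_ne_zero_of_finite
  have hq : (Fintype.card F : ℝ) = m * κ + 1 := by
    rw [← Nat.cast_mul, hκ, Nat.cast_pred Fintype.card_pos, sub_add_cancel]
  have hsqrt : √((1 / (m : ℝ)) * ((κ : ℝ) + 1 / (m : ℝ))) = √(Fintype.card F) / m := by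
    rw [← Real.sqrt_sq (Nat.cast_nonneg (α := ℝ) m), ← Real.sqrt_div (Nat.cast_nonneg _), hq,
      Real.sqrt_sq (Nat.cast_nonneg m)]
    field_simp
  have hperiod := index_mul_norm_gaussianPeriod_le hψ A
  rw [hindex] at hperiod
  calc 1 / (m : ℝ) * ‖gaussianPeriod ψ A‖
    _ = 1 / (m * κ) * (κ * ‖gaussianPeriod ψ A‖) := by field_simp
    _ ≤ 1 / (m * κ) * ((κ - 1) * √(Fintype.card F) + 1) := by gcongr
    _ = 1 / κ * ((κ - 1) * √(1 / m * (κ + 1 / m)) + 1 / m) := by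
      rw [hsqrt]
      field_simp

end FiniteField

lemma harmonicSum_eq_gaussianPeriod (n : ℕ) [NeZero n] (A : Subgroup (ZMod n)ˣ) [Fintype A]
    (ℓ : (ZMod n)ˣ) :
    harmonicSum n A ℓ = gaussianPeriod (ZMod.stdAddChar.mulShift (ℓ : ZMod n)) A := by
  refine Finset.sum_congr rfl fun a _ ↦ ?_
  rw [AddChar.mulShift_apply, ← Units.val_mul, ZMod.stdAddChar_apply, ZMod.toCircle_apply,
    ← Complex.exp_nat_mul]
  congr 1
  ring

/-- Theorem 4 (general `κ`). Let `n` be prime, `m` a divisor of `n-1` with `κ = (n-1)/m`,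
and `A` the unique subgroup of `(ℤ/nℤ)ˣ` of order `m`. The coherence of the harmonic frame,
`μ = max_{ℓ ≠ 0} (1/m)|∑_{a ∈ A} ω^{ℓa}|`, satisfies
`μ ≤ (1/κ)((κ-1)√((1/m)(κ + 1/m)) + 1/m)`. -/
theorem harmonic_frame_coherence_bound (n m κ : ℕ) [NeZero n] (hn : n.Prime)
    (hκ : m * κ = n - 1) (A : Subgroup (ZMod n)ˣ) [Fintype A] (hA : Nat.card A = m) :
    ∀ ℓ : (ZMod n)ˣ,
      (1 / (m : ℝ)) * ‖harmonicSum n A ℓ‖ ≤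
        (1 / (κ : ℝ)) * (((κ : ℝ) - 1) *
            Real.sqrt ((1 / (m : ℝ)) * ((κ : ℝ) + 1 / (m : ℝ))) + 1 / (m : ℝ)) := by
  have : Fact n.Prime := ⟨hn⟩
  exact fun ℓ ↦ harmonicSum_eq_gaussianPeriod n A ℓ ▸ harmonic_frame_coherence_bound_general
    (by rwa [ZMod.card]) (ZMod.isPrimitive_stdAddChar n ℓ.ne_zero) A hA
end

section
/- Let G be a finite group of order n, ρ an irreducible complex representation of G of degree d with character χ, H a subgroup of Aut(G), K := {σ ∈ H : χ∘σ = χ}, and A = {a_1,...,a_m} a subgroup of H of order m such that the set product KA is a subgroup of H, A ∩ K = {1}, and the characters χ∘a for a ∈ A are pairwise distinct. Let {h_i}_{i=1}^{n_c} be representatives of the right cosets of KA in H, and let {g_j}_{j=1}^{n_o} be representatives of the orbits of G under the action of H. Then: (a) for every g ∈ G with g = h(g_j) for some h in the coset KAh_i, one has Σ_{a∈A} χ(a(g)) = Σ_{a∈A} χ(a(h_i(g_j))), so there are at most n_c(n_o − 1) distinct values among {Σ_{a∈A} χ(a(g)) : g ∈ G, g ≠ 1}; and (b) max over nonidentity g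 ∈ G of |Σ_{a∈A} χ(a(g))|² is at most (m·n − m²d²) / min_{(i,j) : g_j ≠ 1} |KAh_i(g_j)|, where KAh_i(g_j) := {k(a(h_i(g_j))) : k ∈ K, a ∈ A}. -/
open scoped Pointwise

/-!
Since `χ` is `K`-invariant and `K ∩ A = 1`, the sum `∑ a ∈ A, χ (a g)` runs over a set of
representatives of the right cosets of `K` in `KA`, which right translation by an element of `KA`
only permutes. The sum is therefore constant on the orbits of `KA`, and the points `h_i (g_j)` meet
all of them. The characters `χ ∘ a` are irreducible and distinct, so by orthogonality the squared
norms of the sum add up to at most `m n` over `G`; the identity contributes `m² d²`, and each of the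
at least `N` points in the orbit of `g ≠ 1` contributes the same amount as `g` itself.
-/

open Representation

section Combinatorics

lemma ncard_le_card_mul_card_sub_one {ι κ α : Type*} [Fintype ι] [Fintype κ] {S : Set α}
    (f : ι → κ → α) (j₀ : κ) (hS : ∀ y ∈ S, ∃ i, ∃ j ≠ j₀, f i j = y) :
    S.ncard ≤ Fintype.card ι * (Fintype.card κ - 1) := by
  classical
  let I : Finset (ι × κ) := Finset.univ ×ˢ Finset.univ.erase j₀
  have hSI : S ⊆ I.image f.uncurry := by
    intro y hy
    obtain ⟨i, j, hj, rfl⟩ := hS y hy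
    exact Finset.mem_image_of_mem f.uncurry (a := (i, j)) (by simp [I, hj])
  calc S.ncard ≤ (I.image f.uncurry : Set α).ncard := Set.ncard_le_ncard hSI
    _ = (I.image f.uncurry).card := Set.ncard_coe_finset _
    _ ≤ I.card := Finset.card_image_le
    _ = Fintype.card ι * (Fintype.card κ - 1) := by
      rw [Finset.card_product, Finset.card_erase_of_mem (Finset.mem_univ j₀), Finset.card_univ,
        Finset.card_univ]

lemma add_ncard_nsmul_le_sum {X M : Type*} [Fintype X] [AddCommMonoid M] [PartialOrder M]
    [IsOrderedAddMonoid M] {w : X → M} (hw : ∀ x, 0 ≤ w x) {S : Set X} {x₀ : X} (hx₀ : x₀ ∉ S)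
    {c : M} (hc : ∀ x ∈ S, c ≤ w x) :
    w x₀ + S.ncard • c ≤ ∑ x, w x := by
  classical
  calc w x₀ + S.ncard • c ≤ w x₀ + ∑ x ∈ S.toFinset, w x := by
        rw [Set.ncard_eq_toFinset_card']
        gcongr
        exact Finset.card_nsmul_le_sum _ _ _ fun x hx ↦ hc x (Set.mem_toFinset.1 hx)
    _ = ∑ x ∈ insert x₀ S.toFinset, w x :=
        (Finset.sum_insert fun hx ↦ hx₀ (Set.mem_toFinset.1 hx)).symm
    _ ≤ ∑ x, w x := Finset.sum_le_univ_sum_of_nonneg hw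

end Combinatorics

section ProductOfSubgroups

variable {M : Type*} [Group M] {J K A : Subgroup M}

lemma exists_perm_forall_mul_mul_inv_mem (hJ : (J : Set M) = (K : Set M) * (A : Set M))
    (hAK : Disjoint A K) {σ : M} (hσ : σ ∈ J) :
    ∃ π : Equiv.Perm A, ∀ a : A, (a : M) * σ * (π a : M)⁻¹ ∈ K := by
  have exists_mul_inv_mem : ∀ x ∈ J, ∃ a : A, x * (a : M)⁻¹ ∈ K := by
    intro x hx
    obtain ⟨k, hk, a, ha, rfl⟩ := Set.mem_mul.1 (hJ ▸ hx : x ∈ (K : Set M) * (A : Set M))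
    exact ⟨⟨a, ha⟩, by simpa using hk⟩
  have eq_of_mul_inv_mem : ∀ a b : A, (a : M) * (b : M)⁻¹ ∈ K → a = b := fun a b hab ↦
    Subtype.ext <| mul_inv_eq_one.1 <|
      Subgroup.disjoint_def.1 hAK (A.mul_mem a.2 (A.inv_mem b.2)) hab
  have hAJ : ∀ a : A, (a : M) ∈ J := fun a ↦
    hJ.ge (Set.mem_mul.2 ⟨1, K.one_mem, a, a.2, one_mul _⟩)
  choose π hπ using fun a : A ↦ exists_mul_inv_mem (a * σ) (J.mul_mem (hAJ a) hσ)
  have hπ_inj : Function.Injective π := by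
    intro a b hab
    refine eq_of_mul_inv_mem a b ?_
    have := K.mul_mem (hπ a) (K.inv_mem (hπ b))
    rw [hab] at this
    convert this using 1
    group
  have hπ_surj : Function.Surjective π := by
    intro b
    obtain ⟨a, ha⟩ := exists_mul_inv_mem (b * σ⁻¹) (J.mul_mem (hAJ b) (J.inv_mem hσ))
    refine ⟨a, (eq_of_mul_inv_mem b (π a) ?_).symm⟩
    convert K.mul_mem ha (hπ a) using 1
    group
  exact ⟨Equiv.ofBijective π ⟨hπ_inj, hπ_surj⟩, hπ⟩

variable {X : Type*} [MulAction M X]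

lemma sum_apply_smul_smul_of_mem {E : Type*} [AddCommMonoid E] [Fintype A]
    (hJ : (J : Set M) = (K : Set M) * (A : Set M)) (hAK : Disjoint A K)
    {f : X → E} (hf : ∀ k ∈ K, ∀ x, f (k • x) = f x) {σ : M} (hσ : σ ∈ J) (x : X) :
    ∑ a : A, f ((a : M) • σ • x) = ∑ a : A, f ((a : M) • x) := by
  obtain ⟨π, hπ⟩ := exists_perm_forall_mul_mul_inv_mem hJ hAK hσ
  calc ∑ a : A, f ((a : M) • σ • x) = ∑ a : A, f ((π a : M) • x) := by
        refine Finset.sum_congr rfl fun a _ ↦ ?_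
        rw [← hf _ (hπ a) ((π a : M) • x), smul_smul, smul_smul, inv_mul_cancel_right]
    _ = ∑ a : A, f ((a : M) • x) := Equiv.sum_comp π fun a : A ↦ f ((a : M) • x)

lemma orbit_eq_setOf_smul_smul (hJ : (J : Set M) = (K : Set M) * (A : Set M)) (x : X) :
    MulAction.orbit J x = {y | ∃ k ∈ K, ∃ a ∈ A, k • a • x = y} := by
  ext y
  constructor
  · rintro ⟨⟨σ, hσ⟩, rfl⟩
    obtain ⟨k, hk, a, ha, rfl⟩ := Set.mem_mul.1 (hJ.le hσ)
    exact ⟨k, hk, a, ha, smul_smul k a x⟩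
  · rintro ⟨k, hk, a, ha, rfl⟩
    exact ⟨⟨k * a, hJ.ge (Set.mul_mem_mul hk ha)⟩, mul_smul k a x⟩

lemma exists_mem_orbit_smul {H : Set M} {ι κ : Type*} {h : ι → M} {r : κ → X}
    (hcosets : ∀ σ ∈ H, ∃ i, σ * (h i)⁻¹ ∈ J) (horbits : ∀ x, ∃ j, ∃ τ ∈ H, τ • r j = x) (x : X) :
    ∃ i j, x ∈ MulAction.orbit J (h i • r j) := by
  obtain ⟨j, τ, hτ, rfl⟩ := horbits x
  obtain ⟨i, hi⟩ := hcosets τ hτ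
  refine ⟨i, j, MulAction.mem_orbit_iff.2 ⟨⟨τ * (h i)⁻¹, hi⟩, ?_⟩⟩
  rw [Subgroup.mk_smul, smul_smul, inv_mul_cancel_right]

end ProductOfSubgroups

section UnitaryTrick

open scoped ComplexOrder

variable {G 𝕜 : Type*} [Group G] [Finite G] [RCLike 𝕜]

lemma exists_posDef_conjTranspose_mul_mul_eq {n : Type*} [Fintype n] [DecidableEq n]
    (M : G →* Matrix n n 𝕜) :
    ∃ P : Matrix n n 𝕜, P.PosDef ∧ ∀ g, (M g).conjTranspose * P * M g = P := by
  cases nonempty_fintype G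
  refine ⟨∑ g, (M g).conjTranspose * M g,
    Matrix.posDef_sum Finset.univ_nonempty fun g _ ↦ .conjTranspose_mul_self (M g) <|
      Matrix.mulVec_injective_of_isUnit ((Group.isUnit g).map M), fun x ↦ ?_⟩
  calc (M x).conjTranspose * (∑ g, (M g).conjTranspose * M g) * M x
      = ∑ g, (M (g * x)).conjTranspose * M (g * x) := by
        simp only [Finset.mul_sum, Finset.sum_mul, map_mul, Matrix.conjTranspose_mul,
          Matrix.mul_assoc]
    _ = ∑ g, (M g).conjTranspose * M g :=
        Equiv.sum_comp (Equiv.mulRight x) fun g ↦ (M g).conjTranspose * M g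

lemma star_trace_eq_trace_inv {n : Type*} [Fintype n] [DecidableEq n] (M : G →* Matrix n n 𝕜)
    (g : G) : star (M g).trace = (M g⁻¹).trace := by
  obtain ⟨P, hP, hMP⟩ := exists_posDef_conjTranspose_mul_mul_eq M
  have hP_det : IsUnit P.det := (Matrix.isUnit_iff_isUnit_det P).1 hP.isUnit
  have hcomm : (M g).conjTranspose * P = P * M g⁻¹ := by
    calc (M g).conjTranspose * P = (M g).conjTranspose * P * (M g * M g⁻¹) := by
          rw [← map_mul, mul_inv_cancel, map_one, Matrix.mul_one]
      _ = P * M g⁻¹ := by rw [← Matrix.mul_assoc, hMP]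
  calc star (M g).trace = ((M g).conjTranspose * P * P⁻¹).trace := by
        rw [Matrix.mul_nonsing_inv_cancel_right _ _ hP_det, Matrix.trace_conjTranspose]
    _ = (M g⁻¹).trace := by
        rw [hcomm, Matrix.trace_mul_comm, Matrix.nonsing_inv_mul_cancel_left _ _ hP_det]

lemma star_character {V : Type*} [AddCommGroup V] [Module 𝕜 V] [FiniteDimensional 𝕜 V]
    (ρ : Representation 𝕜 G V) (g : G) : star (ρ.character g) = ρ.character g⁻¹ := by
  let b := Module.finBasis 𝕜 V
  have htrace : ∀ x, ρ.character x = (LinearMap.toMatrixAlgEquiv b (ρ x)).trace := fun x ↦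
    LinearMap.trace_eq_matrix_trace 𝕜 b (ρ x)
  rw [htrace, htrace]
  exact star_trace_eq_trace_inv
    ((MulEquivClass.toMulEquiv (LinearMap.toMatrixAlgEquiv b)).toMonoidHom.comp ρ) g

end UnitaryTrick

section Irreducible

variable {G k V : Type*} [Monoid G] [Field k] [AddCommGroup V] [Module k V]
  {ρ : Representation k G V}

lemma isIrreducible_of_forall_invariant [Nontrivial V]
    (hρ : ∀ W : Submodule k V, (∀ g : G, ∀ v ∈ W, ρ g v ∈ W) → W = ⊥ ∨ W = ⊤) :
    IsIrreducible ρ where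
  exists_pair_ne := ⟨⊥, ⊤, fun h ↦
    bot_ne_top (α := Submodule k V) (congrArg Subrepresentation.toSubmodule h)⟩
  eq_bot_or_eq_top W :=
    (hρ W.toSubmodule W.apply_mem_toSubmodule).imp
      (fun h ↦ Subrepresentation.toSubmodule_injective h)
      (fun h ↦ Subrepresentation.toSubmodule_injective h)

lemma isIrreducible_comp_of_forall_invariant [Nontrivial V] {M : Type*} [Monoid M] {φ : M →* G}
    (hφ : Function.Surjective φ)
    (hρ : ∀ W : Submodule k V, (∀ g : G, ∀ v ∈ W, ρ g v ∈ W) → W = ⊥ ∨ W = ⊤) :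
    IsIrreducible (ρ.comp φ : Representation k M V) :=
  isIrreducible_of_forall_invariant fun W hW ↦ hρ W <| hφ.forall.2 hW

end Irreducible

section SecondMoment

variable {G : Type*} [Group G] [Fintype G]

open scoped Classical in
lemma sum_character_mul_star_character {V W : Type*}
    [AddCommGroup V] [Module ℂ V] [FiniteDimensional ℂ V]
    [AddCommGroup W] [Module ℂ W] [FiniteDimensional ℂ W]
    (ρ : Representation ℂ G V) (σ : Representation ℂ G W) [IsIrreducible ρ] [IsIrreducible σ] :
    ∑ g, ρ.character g * star (σ.character g) =
      if Nonempty (σ.Equiv ρ) then (Nat.card G : ℂ) else 0 := by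
  have hcard : (Nat.card G : ℂ) ≠ 0 := Nat.cast_ne_zero.2 Nat.card_pos.ne'
  have : Invertible (Nat.card G : ℂ) := invertibleOfNonzero hcard
  have horth := (inv_mul_eq_iff_eq_mul₀ hcard).1 (char_orthonormal ρ σ)
  simpa only [star_character, mul_ite, mul_one, mul_zero] using horth

lemma sum_norm_sum_character_sq {ι : Type*} [Fintype ι] {V : ι → Type*}
    [∀ i, AddCommGroup (V i)] [∀ i, Module ℂ (V i)] [∀ i, FiniteDimensional ℂ (V i)]
    (ρ : ∀ i, Representation ℂ G (V i)) [∀ i, IsIrreducible (ρ i)]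
    (hρ : Function.Injective fun i ↦ (ρ i).character) :
    ∑ g, ‖∑ i, (ρ i).character g‖ ^ 2 = (Nat.card ι * Nat.card G : ℝ) := by
  classical
  have hiso : ∀ i j, Nonempty ((ρ j).Equiv (ρ i)) ↔ i = j := by
    refine fun i j ↦ ⟨fun ⟨φ⟩ ↦ hρ (char_iso φ).symm, ?_⟩
    rintro rfl
    exact ⟨.refl _⟩
  apply Complex.ofReal_injective
  push_cast
  calc ∑ g, (‖∑ i, (ρ i).character g‖ : ℂ) ^ 2
      = ∑ g, ∑ i, ∑ j, (ρ i).character g * star ((ρ j).character g) := by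
        simp only [← Complex.mul_conj', map_sum, Finset.sum_mul_sum, starRingEnd_apply]
    _ = ∑ i, ∑ j, ∑ g, (ρ i).character g * star ((ρ j).character g) := by
        rw [Finset.sum_comm]
        exact Finset.sum_congr rfl fun i _ ↦ Finset.sum_comm
    _ = Nat.card ι * Nat.card G := by
        simp only [sum_character_mul_star_character, hiso, Finset.sum_ite_eq, Finset.mem_univ,
          if_true, Finset.sum_const, Finset.card_univ, nsmul_eq_mul, Nat.card_eq_fintype_card]

end SecondMoment

/-- The sum `g ↦ ∑ a ∈ A, χ (a g)` of the characters `χ ∘ a` of the twists of `ρ` by the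
automorphisms in `A`. Divided by `|A| * dim V`, its values are the normalized inner products of the
columns of the group frame built from `ρ` and `A`. -/
noncomputable def twistedCharacterSum {G k V : Type*} [Group G] [Field k] [AddCommGroup V]
    [Module k V] (ρ : Representation k G V) (A : Subgroup (MulAut G)) [Fintype A] (g : G) : k :=
  ∑ a : A, ρ.character ((a : MulAut G) g)

section TwistedCharacterSum

variable {G V : Type*} [Group G] [AddCommGroup V]

lemma twistedCharacterSum_one {k : Type*} [Field k] [Module k V] [FiniteDimensional k V]
    (ρ : Representation k G V) (A : Subgroup (MulAut G)) [Fintype A] :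
    twistedCharacterSum ρ A 1 = Nat.card A * Module.finrank k V := by
  simp only [twistedCharacterSum, map_one, char_one, Finset.sum_const, Finset.card_univ,
    nsmul_eq_mul, Nat.card_eq_fintype_card]

lemma twistedCharacterSum_eq_of_mem_orbit {k : Type*} [Field k] [Module k V]
    {ρ : Representation k G V} {J K A : Subgroup (MulAut G)} [Fintype A]
    (hJ : (J : Set (MulAut G)) = (K : Set (MulAut G)) * (A : Set (MulAut G)))
    (hAK : Disjoint A K) (hK : ∀ σ ∈ K, ∀ g, ρ.character (σ g) = ρ.character g) {x y : G}
    (hx : x ∈ MulAction.orbit J y) :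
    twistedCharacterSum ρ A x = twistedCharacterSum ρ A y := by
  obtain ⟨σ, rfl⟩ := hx
  exact sum_apply_smul_smul_of_mem hJ hAK hK σ.2 y

lemma disjoint_of_injective_character_comp {k : Type*} [Field k] [Module k V]
    {ρ : Representation k G V} {K A : Subgroup (MulAut G)}
    (hK : ∀ σ ∈ K, ∀ g, ρ.character (σ g) = ρ.character g)
    (hA : Function.Injective fun (a : A) (g : G) ↦ ρ.character ((a : MulAut G) g)) :
    Disjoint A K :=
  Subgroup.disjoint_def.2 fun {a} haA haK ↦
    congrArg Subtype.val (@hA ⟨a, haA⟩ 1 (funext (hK a haK)))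

variable [Module ℂ V] [FiniteDimensional ℂ V] {ρ : Representation ℂ G V}
  {J K A : Subgroup (MulAut G)} [Fintype A]

-- An inequality rather than an equality because `V = 0` is allowed.
lemma sum_norm_twistedCharacterSum_sq_le [Fintype G]
    (hρ : ∀ W : Submodule ℂ V, (∀ g : G, ∀ v ∈ W, ρ g v ∈ W) → W = ⊥ ∨ W = ⊤)
    (hA : Function.Injective fun (a : A) (g : G) ↦ ρ.character ((a : MulAut G) g)) :
    ∑ g, ‖twistedCharacterSum ρ A g‖ ^ 2 ≤ (Nat.card A * Nat.card G : ℝ) := by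
  rcases subsingleton_or_nontrivial V with hV | hV
  · have hχ : ∀ g, ρ.character g = 0 := fun g ↦ by
      rw [character, Subsingleton.elim (ρ g) 0, map_zero]
    simp only [twistedCharacterSum, hχ, Finset.sum_const_zero, norm_zero, ne_eq,
      OfNat.ofNat_ne_zero, not_false_eq_true, zero_pow]
    positivity
  · have := fun a : A ↦ isIrreducible_comp_of_forall_invariant (φ := (a : MulAut G).toMonoidHom)
      (a : MulAut G).surjective hρ
    exact (sum_norm_sum_character_sq
      (fun a : A ↦ (ρ.comp (a : MulAut G).toMonoidHom : Representation ℂ G V)) hA).le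

lemma ncard_orbit_mul_norm_twistedCharacterSum_sq_le [Finite G]
    (hρ : ∀ W : Submodule ℂ V, (∀ g : G, ∀ v ∈ W, ρ g v ∈ W) → W = ⊥ ∨ W = ⊤)
    (hJ : (J : Set (MulAut G)) = (K : Set (MulAut G)) * (A : Set (MulAut G)))
    (hK : ∀ σ ∈ K, ∀ g, ρ.character (σ g) = ρ.character g)
    (hA : Function.Injective fun (a : A) (g : G) ↦ ρ.character ((a : MulAut G) g))
    {x : G} (hx : x ≠ 1) :
    (MulAction.orbit J x).ncard * ‖twistedCharacterSum ρ A x‖ ^ 2 ≤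
      (Nat.card A * Nat.card G - Nat.card A ^ 2 * Module.finrank ℂ V ^ 2 : ℝ) := by
  cases nonempty_fintype G
  have hone : (1 : G) ∉ MulAction.orbit J x := fun ⟨σ, hσ⟩ ↦
    hx ((map_eq_one_iff (σ : MulAut G) (σ : MulAut G).injective).1 hσ)
  have hconst : ∀ y ∈ MulAction.orbit J x,
      ‖twistedCharacterSum ρ A x‖ ^ 2 ≤ ‖twistedCharacterSum ρ A y‖ ^ 2 := fun y hy ↦ by
    rw [twistedCharacterSum_eq_of_mem_orbit hJ (disjoint_of_injective_character_comp hK hA) hK hy]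
  have hsum := (add_ncard_nsmul_le_sum (fun y ↦ sq_nonneg ‖twistedCharacterSum ρ A y‖) hone
    hconst).trans (sum_norm_twistedCharacterSum_sq_le hρ hA)
  rw [twistedCharacterSum_one, norm_mul, Complex.norm_natCast, Complex.norm_natCast, mul_pow,
    nsmul_eq_mul] at hsum
  linarith

end TwistedCharacterSum

theorem group_frame_inner_product_values_and_bound_general
    {G : Type*} [Group G] [Finite G]
    {V : Type*} [AddCommGroup V] [Module ℂ V] [FiniteDimensional ℂ V]
    {ρ : Representation ℂ G V}
    (hρ : ∀ W : Submodule ℂ V, (∀ g : G, ∀ v ∈ W, ρ g v ∈ W) → W = ⊥ ∨ W = ⊤)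
    {H : Set (MulAut G)} {K A : Subgroup (MulAut G)} [Fintype A]
    (hK : ∀ σ ∈ K, ∀ g, ρ.character (σ g) = ρ.character g)
    (hKA : ∃ J : Subgroup (MulAut G),
      (J : Set (MulAut G)) = (K : Set (MulAut G)) * (A : Set (MulAut G)))
    (hA : Function.Injective fun (a : A) (g : G) ↦ ρ.character ((a : MulAut G) g))
    {ι κ : Type*} [Fintype ι] [Fintype κ] {h : ι → MulAut G}
    (hcosets : ∀ σ ∈ H, ∃ i, σ * (h i)⁻¹ ∈ (K : Set (MulAut G)) * (A : Set (MulAut G)))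
    {gr : κ → G} (horbits : ∀ g, ∃ j, ∃ τ ∈ H, τ (gr j) = g)
    {N : ℕ}
    (hN : IsLeast {c : ℕ | ∃ i j, gr j ≠ 1 ∧
      c = Set.ncard {y : G | ∃ k ∈ K, ∃ a ∈ A, k (a (h i (gr j))) = y}} N) :
    (∀ (i : ι) (j : κ) (τ : MulAut G),
        τ * (h i)⁻¹ ∈ (K : Set (MulAut G)) * (A : Set (MulAut G)) →
        twistedCharacterSum ρ A (τ (gr j)) = twistedCharacterSum ρ A (h i (gr j))) ∧
    Set.ncard {x : ℂ | ∃ g : G, g ≠ 1 ∧ x = twistedCharacterSum ρ A g}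
      ≤ Fintype.card ι * (Fintype.card κ - 1) ∧
    (∀ g : G, g ≠ 1 →
      ‖twistedCharacterSum ρ A g‖ ^ 2
        ≤ (Nat.card A * Nat.card G - Nat.card A ^ 2 * Module.finrank ℂ V ^ 2 : ℝ) / N) := by
  obtain ⟨J, hJ⟩ := hKA
  have horbit : ∀ x : G,
      {y : G | ∃ k ∈ K, ∃ a ∈ A, k (a x) = y} = MulAction.orbit J x := fun x ↦
    (orbit_eq_setOf_smul_smul hJ x).symm
  have hconst : ∀ {x y : G}, x ∈ MulAction.orbit J y →
      twistedCharacterSum ρ A x = twistedCharacterSum ρ A y :=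
    twistedCharacterSum_eq_of_mem_orbit hJ (disjoint_of_injective_character_comp hK hA) hK
  simp only [← hJ, SetLike.mem_coe] at hcosets ⊢
  simp only [horbit] at hN
  have hcover : ∀ g : G, g ≠ 1 → ∃ i j, gr j ≠ 1 ∧ g ∈ MulAction.orbit J (h i (gr j)) := by
    intro g hg
    obtain ⟨i, j, σ, rfl⟩ := exists_mem_orbit_smul hcosets horbits g
    refine ⟨i, j, fun hj ↦ hg ?_, σ, rfl⟩
    simp only [hj, smul_one]
  refine ⟨fun i j τ hτ ↦ hconst ⟨⟨τ * (h i)⁻¹, hτ⟩, ?_⟩, ?_, fun g hg ↦ ?_⟩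
  · change (τ * (h i)⁻¹ * h i) (gr j) = τ (gr j)
    rw [inv_mul_cancel_right]
  · obtain ⟨j₀, τ, -, hj₀⟩ := horbits 1
    refine ncard_le_card_mul_card_sub_one (fun i j ↦ twistedCharacterSum ρ A (h i (gr j))) j₀ ?_
    rintro _ ⟨g, hg, rfl⟩
    obtain ⟨i, j, hj, hgij⟩ := hcover g hg
    refine ⟨i, j, ?_, (hconst hgij).symm⟩
    rintro rfl
    exact hj ((map_eq_one_iff τ τ.injective).1 hj₀)
  · obtain ⟨i, j, hj, hgij⟩ := hcover g hg
    have hN_pos : 0 < N := by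
      obtain ⟨i, j, -, rfl⟩ := hN.1
      exact (Set.ncard_pos (Set.toFinite _)).2 (MulAction.nonempty_orbit _)
    have hN_le : N ≤ (MulAction.orbit J g).ncard := by
      rw [MulAction.orbit_eq_iff.2 hgij]
      exact hN.2 ⟨i, j, hj, rfl⟩
    rw [le_div_iff₀' (Nat.cast_pos.2 hN_pos)]
    grw [hN_le]
    exact ncard_orbit_mul_norm_twistedCharacterSum_sq_le hρ hJ hK hA hg

/-- Theorem 8. Let `G` be a finite group of order `n`, `ρ` a degree-`d` irreducible complex
representation of `G` with character `χ`, `H ≤ Aut(G)`, `K` the subgroup of `H` fixing `χ`,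
and `A ≤ H` of order `m` with `KA` a subgroup, `A ⊓ K = ⊥`, and the characters `χ ∘ a`
(`a ∈ A`) pairwise distinct. With `{h i}` representatives of the right cosets of `KA` in `H`
and `{gr j}` representatives of the orbits of `G` under `H`:
(a) the sum `∑_{a ∈ A} χ(a(g))` depends only on the pair `(i, j)` with `g ∈ KAh_i(g_j)`,
so at most `n_c (n_o - 1)` distinct values arise for `g ≠ 1`; and
(b) `max_{g ≠ 1} |∑_{a ∈ A} χ(a(g))|² ≤ (mn - m²d²) / min_{(i,j), g_j ≠ 1} |KAh_i(g_j)|`. -/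
theorem group_frame_inner_product_values_and_bound
    (G : Type*) [Group G] [Fintype G]
    (n : ℕ) (hn : Fintype.card G = n)
    (V : Type*) [AddCommGroup V] [Module ℂ V] [FiniteDimensional ℂ V]
    (d : ℕ) (hd : Module.finrank ℂ V = d)
    (ρ : Representation ℂ G V)
    (hirr : ∀ W : Submodule ℂ V, (∀ g : G, ∀ v ∈ W, ρ g v ∈ W) → W = ⊥ ∨ W = ⊤)
    (χ : G → ℂ) (hχ : ∀ g : G, χ g = LinearMap.trace ℂ V (ρ g))
    (H K A : Subgroup (MulAut G)) (hAH : A ≤ H) [Fintype A]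
    (m : ℕ) (hm : Nat.card A = m)
    (hK : ∀ σ : MulAut G, σ ∈ K ↔ σ ∈ H ∧ ∀ g : G, χ (σ g) = χ g)
    (hKA : ∃ J : Subgroup (MulAut G),
      (J : Set (MulAut G)) = (K : Set (MulAut G)) * (A : Set (MulAut G)))
    (hAK : A ⊓ K = ⊥)
    (hdistinct : ∀ a₁ a₂ : MulAut G, a₁ ∈ A → a₂ ∈ A →
      (∀ g : G, χ (a₁ g) = χ (a₂ g)) → a₁ = a₂)
    (n_c n_o : ℕ)
    (h : Fin n_c → MulAut G) (hh : ∀ i, h i ∈ H)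
    (hcosets : ∀ σ ∈ H, ∃! i : Fin n_c,
      σ * (h i)⁻¹ ∈ (K : Set (MulAut G)) * (A : Set (MulAut G)))
    (gr : Fin n_o → G)
    (horbits : ∀ g : G, ∃! j : Fin n_o, ∃ τ ∈ H, τ (gr j) = g)
    (N : ℕ)
    (hN : IsLeast {c : ℕ | ∃ (i : Fin n_c) (j : Fin n_o), gr j ≠ 1 ∧
      c = Set.ncard {y : G | ∃ k ∈ K, ∃ a ∈ A, k ((a : MulAut G) ((h i) (gr j))) = y}} N) :
    (∀ (g : G) (i : Fin n_c) (j : Fin n_o) (τ : MulAut G), τ ∈ H →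
        τ * (h i)⁻¹ ∈ (K : Set (MulAut G)) * (A : Set (MulAut G)) →
        τ (gr j) = g →
        ∑ a : A, χ ((a : MulAut G) g) = ∑ a : A, χ ((a : MulAut G) ((h i) (gr j)))) ∧
    Set.ncard {x : ℂ | ∃ g : G, g ≠ 1 ∧ x = ∑ a : A, χ ((a : MulAut G) g)}
      ≤ n_c * (n_o - 1) ∧
    (∀ g : G, g ≠ 1 →
      ‖∑ a : A, χ ((a : MulAut G) g)‖ ^ 2
        ≤ ((m : ℝ) * n - (m : ℝ) ^ 2 * (d : ℝ) ^ 2) / (N : ℝ)) := by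
  subst hn hd hm
  obtain rfl : χ = ρ.character := funext hχ
  obtain ⟨hvalues, hcount, hbound⟩ :=
    group_frame_inner_product_values_and_bound_general (H := H) hirr
      (fun σ hσ ↦ ((hK σ).1 hσ).2) hKA
      (fun a b hab ↦ Subtype.ext (hdistinct a b a.2 b.2 (congrFun hab)))
      (fun σ hσ ↦ (hcosets σ hσ).exists) (fun g ↦ (horbits g).exists) hN
  simp only [Fintype.card_fin, Nat.card_eq_fintype_card] at hcount hbound ⊢
  exact ⟨by rintro _ i j τ - hτ rfl; exact hvalues i j τ hτ, hcount, hbound⟩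
end

section
/- Let p be a prime, r a positive integer, n = p^r, m a divisor of n−1, A the unique subgroup of order m of the multiplicative group 𝔽_{p^r}ˣ, ω = e^{2πi/p}, Tr : 𝔽_{p^r} → 𝔽_p the field trace, and κ := (n−1)/m. Then the coherence μ := max over nonzero x ∈ 𝔽_{p^r} of (1/m)|Σ_{a ∈ A} ω^{Tr(a x)}| satisfies μ ≤ (1/κ)·((κ−1)·√((1/m)(κ + 1/m)) + 1/m). -/
/-!
Let `ψ` be a primitive additive character of a ring with `n` elements, let `A` be a group of `m`
units, and put `η z = ∑ a ∈ A, ψ (a z)` and `n = m κ + 1`. The function `η` is constant on the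
orbits of `A`, equals `m` at `0`, has sum `0`, and `∑ z, ‖η z‖ ^ 2 = n m` by Parseval. Removing
`0` and the `m` points of the orbit of `x` from both sums leaves `n - 1 - m = m (κ - 1)` points, on
which Cauchy–Schwarz gives `‖1 + η x‖ ^ 2 ≤ (κ - 1) (n - m - ‖η x‖ ^ 2)`. Completing the square
turns this into `‖κ η x + 1‖ ≤ (κ - 1) √n`, and the triangle inequality finishes.
-/

/-- `∑_{a ∈ A} ω^{Tr(a·z)}` with `ω = e^{2πi/p}`, for a subgroup `A` of the group of units
of the finite field `F` of characteristic `p`, where `Tr` is the field trace to `𝔽_p`. -/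
noncomputable def traceCharSum (p : ℕ) (F : Type*) [Field F] [Algebra (ZMod p) F]
    (A : Subgroup Fˣ) [Fintype A] (z : F) : ℂ :=
  ∑ a : A, Complex.exp (2 * Real.pi * Complex.I / p) ^
      (Algebra.trace (ZMod p) F (((a : Fˣ) : F) * z)).val

open Finset
open scoped ComplexConjugate

section OffOrbit

variable {G M N : Type*} [Group G] [AddMonoid M] [DistribMulAction G M] [Fintype M]

variable (G) in
open scoped Classical in
/-- The nonzero elements of `M` outside the orbit of `x`. -/
noncomputable def offOrbit (x : M) : Finset M :=
  {z | z ≠ 0 ∧ z ∉ MulAction.orbit G x}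

variable [Fintype G] {x : M}

theorem sum_eq_add_card_nsmul_add_sum_offOrbit [AddCommMonoid N] (hx : x ≠ 0)
    (hfree : Function.Injective fun g : G ↦ g • x) (f : M → N) (hf : ∀ g : G, f (g • x) = f x) :
    ∑ z, f z = f 0 + Fintype.card G • f x + ∑ z ∈ offOrbit G x, f z := by
  classical
  let orbit : Finset M := univ.map ⟨fun g : G ↦ g • x, hfree⟩
  have zero_notMem : (0 : M) ∉ orbit := by simp [orbit, smul_eq_zero_iff_eq, hx]
  have compl_eq : (insert 0 orbit)ᶜ = offOrbit G x := by
    ext z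
    simp [orbit, offOrbit, MulAction.mem_orbit_iff]
  have sum_orbit : ∑ z ∈ orbit, f z = Fintype.card G • f x := by
    simp only [orbit, sum_map, Function.Embedding.coeFn_mk, hf, sum_const, card_univ]
  rw [← sum_add_sum_compl (insert 0 orbit), sum_insert zero_notMem, sum_orbit, compl_eq]

theorem card_offOrbit (hx : x ≠ 0) (hfree : Function.Injective fun g : G ↦ g • x) :
    Fintype.card M = 1 + Fintype.card G + #(offOrbit G x) := by
  simpa using sum_eq_add_card_nsmul_add_sum_offOrbit hx hfree (fun _ ↦ (1 : ℕ)) fun _ ↦ rfl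

theorem card_offOrbit_eq_card_mul_sub_one (hx : x ≠ 0)
    (hfree : Function.Injective fun g : G ↦ g • x) {κ : ℝ}
    (hκ : Fintype.card G * κ + 1 = Fintype.card M) :
    (#(offOrbit G x) : ℝ) = Fintype.card G * (κ - 1) := by
  have hcard : (Fintype.card M : ℝ) = 1 + Fintype.card G + #(offOrbit G x) :=
    mod_cast card_offOrbit hx hfree
  linear_combination -hκ - hcard

theorem one_le_of_card_mul_add_one_eq_card (hx : x ≠ 0)
    (hfree : Function.Injective fun g : G ↦ g • x) {κ : ℝ}
    (hκ : Fintype.card G * κ + 1 = Fintype.card M) : 1 ≤ κ := by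
  have hG : (0 : ℝ) < Fintype.card G := Nat.cast_pos.mpr Fintype.card_pos
  rw [← sub_nonneg, ← mul_nonneg_iff_of_pos_left hG,
    ← card_offOrbit_eq_card_mul_sub_one hx hfree hκ]
  exact Nat.cast_nonneg _

end OffOrbit

theorem norm_sum_sq_le_card_mul_sum_norm_sq {ι E : Type*} [SeminormedAddCommGroup E]
    (s : Finset ι) (f : ι → E) : ‖∑ i ∈ s, f i‖ ^ 2 ≤ #s * ∑ i ∈ s, ‖f i‖ ^ 2 :=
  (pow_le_pow_left₀ (norm_nonneg _) (norm_sum_le s f) 2).trans sq_sum_le_card_mul_sum_sq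

theorem injective_smul_of_ne_zero {S : Type*} [MonoidWithZero S] [IsRightCancelMulZero S]
    (A : Subgroup Sˣ) {x : S} (hx : x ≠ 0) : Function.Injective fun a : A ↦ a • x := fun _ _ h ↦
  Subtype.ext (Units.ext (mul_right_cancel₀ hx h))

section GaussPeriod

variable {R : Type*} [CommRing R] {ψ : AddChar R ℂ}

theorem sum_norm_sq_sum_mul_addChar [Fintype R] {ι : Type*} [Fintype ι] (hψ : ψ.IsPrimitive)
    (c : ι → ℂ) {f : ι → R} (hf : Function.Injective f) :
    ∑ z, ‖∑ i, c i * ψ (z * f i)‖ ^ 2 = Fintype.card R * ∑ i, ‖c i‖ ^ 2 := by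
  classical
  have expand (z : R) : ((‖∑ i, c i * ψ (z * f i)‖ ^ 2 : ℝ) : ℂ) =
      ∑ i, ∑ j, c i * conj (c j) * ψ (z * (f i - f j)) := by
    push_cast
    rw [← Complex.mul_conj', map_sum, sum_mul_sum]
    refine sum_congr rfl fun i _ ↦ sum_congr rfl fun j _ ↦ ?_
    rw [mul_sub, sub_eq_add_neg, AddChar.map_add_eq_mul, AddChar.map_neg_eq_conj,
      map_mul (starRingEnd ℂ)]
    ring
  have orthogonality (i j : ι) :
      ∑ z, ψ (z * (f i - f j)) = if i = j then (Fintype.card R : ℂ) else 0 := by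
    simp only [AddChar.sum_mulShift _ hψ, sub_eq_zero, hf.eq_iff, Nat.cast_ite, Nat.cast_zero]
  apply Complex.ofReal_injective
  calc ((∑ z, ‖∑ i, c i * ψ (z * f i)‖ ^ 2 : ℝ) : ℂ)
      = ∑ z, ∑ i, ∑ j, c i * conj (c j) * ψ (z * (f i - f j)) := by
        rw [Complex.ofReal_sum]
        exact sum_congr rfl fun z _ ↦ expand z
    _ = ∑ i, ∑ j, c i * conj (c j) * ∑ z, ψ (z * (f i - f j)) := by
        rw [sum_comm]
        refine sum_congr rfl fun i _ ↦ ?_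
        rw [sum_comm]
        simp only [mul_sum]
    _ = ((Fintype.card R * ∑ i, ‖c i‖ ^ 2 : ℝ) : ℂ) := by
        simp only [orthogonality, mul_ite, mul_zero, sum_ite_eq, mem_univ, if_true,
          Complex.mul_conj']
        push_cast
        rw [← sum_mul, mul_comm]

/-- The Gaussian period of `A` at `z` with respect to the additive character `ψ`; an element
`a : A` acts on `R` by multiplication. -/
noncomputable def gaussPeriod (ψ : AddChar R ℂ) (A : Subgroup Rˣ) [Fintype A] (z : R) : ℂ :=
  ∑ a : A, ψ (a • z)

variable (A : Subgroup Rˣ) [Fintype A]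

theorem gaussPeriod_zero : gaussPeriod ψ A 0 = Fintype.card A := by
  simp [gaussPeriod]

theorem gaussPeriod_smul (b : A) (z : R) : gaussPeriod ψ A (b • z) = gaussPeriod ψ A z := by
  simp only [gaussPeriod, smul_smul]
  exact Fintype.sum_equiv (Equiv.mulRight b) _ _ fun _ ↦ rfl

variable [Fintype R]

theorem sum_gaussPeriod (hψ : ψ ≠ 1) : ∑ z, gaussPeriod ψ A z = 0 := by
  simp only [gaussPeriod]
  rw [sum_comm]
  refine sum_eq_zero fun a _ ↦ ?_
  rw [Fintype.sum_equiv (MulAction.toPerm a) (fun z ↦ ψ (a • z)) ψ fun _ ↦ rfl,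
    AddChar.sum_eq_zero_of_ne_one hψ]

theorem sum_norm_sq_gaussPeriod (hψ : ψ.IsPrimitive) :
    ∑ z, ‖gaussPeriod ψ A z‖ ^ 2 = Fintype.card R * Fintype.card A := by
  have coe_injective : Function.Injective fun a : A ↦ ((a : Rˣ) : R) :=
    Units.val_injective.comp Subtype.val_injective
  simpa [gaussPeriod, Subgroup.smul_def, Units.smul_def, mul_comm] using
    sum_norm_sq_sum_mul_addChar hψ (fun _ ↦ 1) coe_injective

variable {A} {x : R}

theorem card_mul_norm_one_add_gaussPeriod_sq_le (hψ : ψ.IsPrimitive) (hx : x ≠ 0)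
    (hfree : Function.Injective fun a : A ↦ a • x) :
    Fintype.card A * ‖1 + gaussPeriod ψ A x‖ ^ 2 ≤
      #(offOrbit A x) * (Fintype.card R - Fintype.card A - ‖gaussPeriod ψ A x‖ ^ 2) := by
  set m := Fintype.card A
  have hm : (0 : ℝ) < m := mod_cast Fintype.card_pos
  have ψ_ne_one : ψ ≠ 1 := by
    rintro rfl
    exact hψ hx (by ext; simp)
  have sum_off : ∑ z ∈ offOrbit A x, gaussPeriod ψ A z = -(m * (1 + gaussPeriod ψ A x)) := by
    have split := sum_eq_add_card_nsmul_add_sum_offOrbit hx hfree (gaussPeriod ψ A)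
      (gaussPeriod_smul A · x)
    rw [sum_gaussPeriod A ψ_ne_one, gaussPeriod_zero, nsmul_eq_mul] at split
    linear_combination -split
  have sum_sq_off : ∑ z ∈ offOrbit A x, ‖gaussPeriod ψ A z‖ ^ 2 =
      m * (Fintype.card R - m - ‖gaussPeriod ψ A x‖ ^ 2) := by
    have split := sum_eq_add_card_nsmul_add_sum_offOrbit hx hfree (‖gaussPeriod ψ A ·‖ ^ 2)
      fun a ↦ by rw [gaussPeriod_smul]
    rw [sum_norm_sq_gaussPeriod A hψ, gaussPeriod_zero, Complex.norm_natCast, nsmul_eq_mul] at split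
    linear_combination -split
  have cauchy_schwarz := norm_sum_sq_le_card_mul_sum_norm_sq (offOrbit A x) (gaussPeriod ψ A)
  rw [sum_off, sum_sq_off, norm_neg, norm_mul, Complex.norm_natCast] at cauchy_schwarz
  refine le_of_mul_le_mul_left ?_ hm
  linear_combination cauchy_schwarz

theorem norm_mul_gaussPeriod_add_one_le (hψ : ψ.IsPrimitive) (hx : x ≠ 0)
    (hfree : Function.Injective fun a : A ↦ a • x) {κ : ℝ}
    (hκ : Fintype.card A * κ + 1 = Fintype.card R) :
    ‖κ * gaussPeriod ψ A x + 1‖ ≤ (κ - 1) * √(Fintype.card R) := by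
  set m : ℝ := (Fintype.card A : ℝ)
  set n : ℝ := (Fintype.card R : ℝ)
  set η := gaussPeriod ψ A x
  have hm : 0 < m := Nat.cast_pos.mpr Fintype.card_pos
  have hκ₁ : 1 ≤ κ := one_le_of_card_mul_add_one_eq_card hx hfree hκ
  have cauchy_schwarz : ‖1 + η‖ ^ 2 ≤ (κ - 1) * (n - m - ‖η‖ ^ 2) := by
    refine le_of_mul_le_mul_left ?_ hm
    rw [← mul_assoc, ← card_offOrbit_eq_card_mul_sub_one hx hfree hκ]
    exact card_mul_norm_one_add_gaussPeriod_sq_le hψ hx hfree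
  have complete_square :
      ‖κ * η + 1‖ ^ 2 = κ * ‖1 + η‖ ^ 2 + (κ - 1) * (κ * ‖η‖ ^ 2 - 1) := by
    simp only [Complex.sq_norm, Complex.normSq_apply, Complex.add_re, Complex.add_im,
      Complex.re_ofReal_mul, Complex.im_ofReal_mul, Complex.one_re, Complex.one_im]
    ring
  refine le_of_sq_le_sq ?_ (mul_nonneg (sub_nonneg.mpr hκ₁) (Real.sqrt_nonneg n))
  calc ‖κ * η + 1‖ ^ 2
      ≤ κ * ((κ - 1) * (n - m - ‖η‖ ^ 2)) + (κ - 1) * (κ * ‖η‖ ^ 2 - 1) := by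
        rw [complete_square]
        gcongr
    _ = (κ - 1) ^ 2 * n := by linear_combination (1 - κ) * hκ
    _ = ((κ - 1) * √n) ^ 2 := by rw [mul_pow, Real.sq_sqrt (Nat.cast_nonneg _)]

theorem finite_field_frame_coherence_bound_general (hψ : ψ.IsPrimitive) (hx : x ≠ 0)
    (hfree : Function.Injective fun a : A ↦ a • x) {m κ : ℝ} (hm : Fintype.card A = m)
    (hκ : m * κ + 1 = Fintype.card R) :
    1 / m * ‖gaussPeriod ψ A x‖ ≤ 1 / κ * ((κ - 1) * √(1 / m * (κ + 1 / m)) + 1 / m) := by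
  subst hm
  set m : ℝ := (Fintype.card A : ℝ)
  have m_pos : 0 < m := Nat.cast_pos.mpr Fintype.card_pos
  have hκ₁ : 1 ≤ κ := one_le_of_card_mul_add_one_eq_card hx hfree hκ
  have norm_le : κ * ‖gaussPeriod ψ A x‖ ≤ (κ - 1) * √(m * κ + 1) + 1 := by
    have triangle := norm_le_add_norm_add (κ * gaussPeriod ψ A x) 1
    rw [norm_mul, Complex.norm_of_nonneg (by linarith), norm_one] at triangle
    rw [hκ]
    linarith [norm_mul_gaussPeriod_add_one_le hψ hx hfree hκ]
  have sqrt_eq : √(1 / m * (κ + 1 / m)) = √(m * κ + 1) / m := by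
    rw [show 1 / m * (κ + 1 / m) = (m * κ + 1) / m ^ 2 by field_simp,
      Real.sqrt_div' _ (sq_nonneg m), Real.sqrt_sq m_pos.le]
  calc 1 / m * ‖gaussPeriod ψ A x‖ = 1 / (κ * m) * (κ * ‖gaussPeriod ψ A x‖) := by field_simp
    _ ≤ 1 / (κ * m) * ((κ - 1) * √(m * κ + 1) + 1) := by gcongr
    _ = 1 / κ * ((κ - 1) * √(1 / m * (κ + 1 / m)) + 1 / m) := by
      rw [sqrt_eq]
      field_simp

end GaussPeriod

section TraceChar

variable (p : ℕ) [Fact p.Prime] (F : Type*) [Field F] [Algebra (ZMod p) F]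

/-- The canonical additive character `x ↦ ω ^ Tr x` of `F`, where `ω = e ^ (2πi/p)`. -/
noncomputable def traceChar : AddChar F ℂ :=
  (AddChar.zmodChar p (Complex.isPrimitiveRoot_exp p (NeZero.ne p)).pow_eq_one).compAddMonoidHom
    (Algebra.trace (ZMod p) F).toAddMonoidHom

theorem isPrimitive_traceChar [Finite F] : (traceChar p F).IsPrimitive := by
  refine AddChar.IsPrimitive.of_ne_one (AddChar.ne_one_iff.mpr ?_)
  obtain ⟨x, hx⟩ := Algebra.trace_surjective (ZMod p) F 1
  have omega_ne_one :=
    (Complex.isPrimitiveRoot_exp p (NeZero.ne p)).ne_one (Fact.out : p.Prime).one_lt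
  refine ⟨x, ?_⟩
  simpa [traceChar, hx, AddChar.zmodChar_apply, ZMod.val_one] using omega_ne_one

theorem traceCharSum_eq_gaussPeriod (A : Subgroup Fˣ) [Fintype A] (z : F) :
    traceCharSum p F A z = gaussPeriod (traceChar p F) A z :=
  rfl

end TraceChar

/-- Theorem 6 (general `κ`, finite fields). Let `n = p^r`, `m ∣ n - 1` with
`κ = (n-1)/m`, and `A` the unique subgroup of `𝔽_{p^r}ˣ` of order `m`. The coherence
`μ = max_{x ≠ 0} (1/m)|∑_{a ∈ A} ω^{Tr(ax)}|` satisfies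
`μ ≤ (1/κ)((κ-1)√((1/m)(κ + 1/m)) + 1/m)`. -/
theorem finite_field_frame_coherence_bound (p r : ℕ) [Fact p.Prime] (hr : 0 < r)
    (F : Type*) [Field F] [Fintype F] [Algebra (ZMod p) F]
    (hF : Fintype.card F = p ^ r)
    (m κ : ℕ) (hκ : m * κ = p ^ r - 1)
    (A : Subgroup Fˣ) [Fintype A] (hA : Nat.card A = m) :
    ∀ x : F, x ≠ 0 →
      (1 / (m : ℝ)) * ‖traceCharSum p F A x‖ ≤
        (1 / (κ : ℝ)) * (((κ : ℝ) - 1) *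
            Real.sqrt ((1 / (m : ℝ)) * ((κ : ℝ) + 1 / (m : ℝ))) + 1 / (m : ℝ)) := by
  intro x hx
  have hn : m * κ + 1 = Fintype.card F := by
    rw [hκ, ← hF, Nat.sub_add_cancel Fintype.card_pos]
  rw [traceCharSum_eq_gaussPeriod]
  exact finite_field_frame_coherence_bound_general (isPrimitive_traceChar p F) hx
    (injective_smul_of_ne_zero A hx) (by rw [← hA, Nat.card_eq_fintype_card]) (mod_cast hn)
end

section
/- Let p be an odd prime, r a positive integer, n = p^r, m an odd divisor of n−1, A the unique subgroup of order m of 𝔽_{p^r}ˣ, ω = e^{2πi/p}, Tr : 𝔽_{p^r} → 𝔽_p the field trace, and κ := (n−1)/m. Then the coherence μ := max over nonzero x ∈ 𝔽_{p^r} of (1/m)|Σ_{a ∈ A} ω^{Tr(a x)}| satisfies μ ≤ (1/κ)·√( (1/m + (κ/2 − 1)·β)² + (κ/2)²·β² ), where β = √((1/m)(κ + 1/m)). -/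
/-!
Write `n = |F|` and `S z = ∑_{a ∈ A} ψ (a z)`, where `ψ = ω ^ Tr` is a primitive additive character.
Since `|A|` is odd and `-1 ≠ 1`, `-1 ∉ A`, so `A` and `-A` are disjoint. Parseval then gives
`∑ z, |S z|² = n m` and `∑ z, (S z)² = 0`: the real and the imaginary part of `S` have the same
`ℓ²` mass `n m / 2`. Moreover `re S` and `(im S)²` are constant on the `2 m` points of `±A x`.
Comparing masses gives `(im S x)² ≤ n / 4`. On `F ∖ {0}`, which has `m κ` elements, `re S` has
mean `-1 / κ`, and Samuelson's inequality for a value taken `2 m` times gives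
`|κ re S x + 1| ≤ (κ / 2 - 1) √n`.
-/

open Finset
open scoped ComplexConjugate Pointwise

/-- Samuelson's inequality, sharpened by the multiplicity `#t` of the value `c`. -/
theorem card_mul_sq_card_mul_sub_sum_le {ι K : Type*} [CommRing K] [LinearOrder K]
    [IsStrictOrderedRing K] {s t : Finset ι} (hts : t ⊆ s) {f : ι → K} {c : K}
    (hf : ∀ i ∈ t, f i = c) :
    #t * (#s * c - ∑ i ∈ s, f i) ^ 2 ≤
      (#s - #t) * (#s * ∑ i ∈ s, f i ^ 2 - (∑ i ∈ s, f i) ^ 2) := by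
  classical
  have sum_t : ∑ i ∈ t, f i = #t * c := by
    rw [sum_congr rfl hf, sum_const, nsmul_eq_mul]
  have sum_sq_t : ∑ i ∈ t, f i ^ 2 = #t * c ^ 2 := by
    rw [sum_congr rfl fun i hi ↦ by rw [hf i hi], sum_const, nsmul_eq_mul]
  have cauchy_schwarz : (∑ i ∈ s, f i - #t * c) ^ 2 ≤
      (#s - #t) * (∑ i ∈ s, f i ^ 2 - #t * c ^ 2) := by
    rw [← sum_t, ← sum_sq_t, ← sum_sdiff_eq_sub hts, ← sum_sdiff_eq_sub hts,
      ← cast_card_sdiff hts]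
    exact sq_sum_le_card_mul_sum_sq
  -- The difference of the two sides of the goal is `#s` times that of `cauchy_schwarz`.
  linarith [mul_le_mul_of_nonneg_left cauchy_schwarz (Nat.cast_nonneg (α := K) #s)]

theorem neg_one_notMem_of_odd_card {G : Type*} [Group G] [HasDistribNeg G] (h : (-1 : G) ≠ 1)
    {A : Subgroup G} (hA : Odd (Nat.card A)) : -1 ∉ A := by
  intro hmem
  have pow_card : (-1 : G) ^ Nat.card A = 1 :=
    orderOf_dvd_iff_pow_eq_one.mp (A.orderOf_dvd_natCard hmem)
  rw [hA.neg_one_pow] at pow_card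
  exact h pow_card

section UnitsFinset

variable {M : Type*} [Monoid M] (A : Subgroup Mˣ) [Fintype A]

/-- The elements of a finite group `A` of units of `M`, as a finset of `M`. -/
def unitsFinset : Finset M :=
  univ.map ⟨fun a : A ↦ ((a : Mˣ) : M), Units.val_injective.comp Subtype.val_injective⟩

variable {A}

theorem mem_unitsFinset {y : M} : y ∈ unitsFinset A ↔ ∃ a ∈ A, (a : M) = y := by
  simp [unitsFinset]

variable (A)

theorem card_unitsFinset : #(unitsFinset A) = Nat.card A := by
  simp [unitsFinset]

theorem sum_unitsFinset {N : Type*} [AddCommMonoid N] (f : M → N) :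
    ∑ y ∈ unitsFinset A, f y = ∑ a : A, f ((a : Mˣ) : M) := by
  simp [unitsFinset]

end UnitsFinset

theorem zero_notMem_unitsFinset {M₀ : Type*} [MonoidWithZero M₀] [Nontrivial M₀]
    (A : Subgroup M₀ˣ) [Fintype A] : 0 ∉ unitsFinset A := by
  simp [mem_unitsFinset]

theorem disjoint_neg_unitsFinset {R : Type*} [Ring R] [DecidableEq R] {A : Subgroup Rˣ}
    [Fintype A] (hA : -1 ∉ A) : Disjoint (unitsFinset A) (-unitsFinset A) := by
  rw [disjoint_left]
  intro y hy hy_neg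
  obtain ⟨a, ha, rfl⟩ := mem_unitsFinset.mp hy
  obtain ⟨b, hb, hba⟩ := mem_unitsFinset.mp (mem_neg'.mp hy_neg)
  obtain rfl : b = -a := Units.ext hba
  exact hA (by simpa using A.mul_mem hb (A.inv_mem ha))

section SignedOrbit

variable {F : Type*} [Field F] [DecidableEq F] (A : Subgroup Fˣ) [Fintype A]

/-- The orbit `±A x` of `x` under the group generated by `A` and `-1`. -/
def signedOrbit (x : F) : Finset F :=
  (unitsFinset A ∪ -unitsFinset A).image (· * x)

variable {A}

theorem mem_signedOrbit {x y : F} :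
    y ∈ signedOrbit A x ↔ ∃ a ∈ A, (a : F) * x = y ∨ -((a : F) * x) = y := by
  simp only [signedOrbit, mem_image, mem_union, mem_neg', mem_unitsFinset]
  constructor
  · rintro ⟨_, ⟨a, ha, rfl⟩ | ⟨a, ha, hab⟩, rfl⟩
    · exact ⟨a, ha, .inl rfl⟩
    · exact ⟨a, ha, .inr (by rw [hab]; ring)⟩
  · rintro ⟨a, ha, rfl | rfl⟩
    · exact ⟨a, .inl ⟨a, ha, rfl⟩, rfl⟩
    · exact ⟨-a, .inr ⟨a, ha, (neg_neg _).symm⟩, neg_mul _ _⟩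

theorem card_signedOrbit (hA : -1 ∉ A) {x : F} (hx : x ≠ 0) :
    #(signedOrbit A x) = 2 * Nat.card A := by
  rw [signedOrbit, card_image_of_injective _ (mul_left_injective₀ hx),
    card_union_of_disjoint (disjoint_neg_unitsFinset hA), card_neg, card_unitsFinset, two_mul]

theorem zero_notMem_signedOrbit {x : F} (hx : x ≠ 0) : 0 ∉ signedOrbit A x := by
  simp [mem_signedOrbit, hx]

end SignedOrbit

section AddCharSum

variable {R : Type*} [CommRing R]

/-- The Fourier transform `z ↦ ∑_{b ∈ B} ψ (b z)` of the indicator function of `B`, with respect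
to the additive character `ψ`. -/
noncomputable def addCharSum (ψ : AddChar R ℂ) (B : Finset R) (z : R) : ℂ :=
  ∑ b ∈ B, ψ (b * z)

theorem addCharSum_zero_right (ψ : AddChar R ℂ) (B : Finset R) : addCharSum ψ B 0 = #B := by
  simp [addCharSum]

theorem addCharSum_singleton_zero (ψ : AddChar R ℂ) (z : R) : addCharSum ψ {0} z = 1 := by
  simp [addCharSum]

theorem addCharSum_unitsFinset_mul_of_mem (ψ : AddChar R ℂ) {A : Subgroup Rˣ} [Fintype A] {a : Rˣ}
    (ha : a ∈ A) (z : R) :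
    addCharSum ψ (unitsFinset A) (a * z) = addCharSum ψ (unitsFinset A) z := by
  simp only [addCharSum, sum_unitsFinset]
  exact Fintype.sum_equiv (Equiv.mulRight ⟨a, ha⟩) _ _ fun b ↦ by simp [mul_assoc]

variable [Finite R]

theorem addCharSum_neg_right (ψ : AddChar R ℂ) (B : Finset R) (z : R) :
    addCharSum ψ B (-z) = conj (addCharSum ψ B z) := by
  simp only [addCharSum, map_sum, mul_neg, AddChar.map_neg_eq_conj]

theorem addCharSum_neg_left [DecidableEq R] (ψ : AddChar R ℂ) (B : Finset R) (z : R) :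
    addCharSum ψ (-B) z = conj (addCharSum ψ B z) := by
  rw [← addCharSum_neg_right]
  simp [addCharSum, sum_neg_index]

end AddCharSum

section Moments

variable {R : Type*} [CommRing R] [Fintype R] {ψ : AddChar R ℂ} {B : Finset R}

theorem sum_addCharSum_mul_conj [DecidableEq R] (hψ : ψ.IsPrimitive) (B C : Finset R) :
    ∑ z, addCharSum ψ B z * conj (addCharSum ψ C z) = Fintype.card R * #(B ∩ C) := by
  have orthogonality (b c : R) :
      ∑ z, ψ (b * z) * conj (ψ (c * z)) = if b = c then (Fintype.card R : ℂ) else 0 := by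
    simp_rw [← AddChar.map_neg_eq_conj, ← AddChar.map_add_eq_mul, ← sub_eq_add_neg, ← sub_mul,
      mul_comm (b - c), AddChar.sum_mulShift _ hψ, sub_eq_zero]
    split_ifs <;> simp
  calc ∑ z, addCharSum ψ B z * conj (addCharSum ψ C z)
      = ∑ b ∈ B, ∑ c ∈ C, ∑ z, ψ (b * z) * conj (ψ (c * z)) := by
        simp only [addCharSum, map_sum, sum_mul_sum]
        rw [sum_comm]
        exact sum_congr rfl fun b _ ↦ sum_comm
    _ = Fintype.card R * #(B ∩ C) := by
        simp [orthogonality, mul_comm]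

theorem sum_re_addCharSum (hψ : ψ.IsPrimitive) (hB : 0 ∉ B) :
    ∑ z, (addCharSum ψ B z).re = 0 := by
  classical
  simpa [addCharSum_singleton_zero, inter_singleton_of_notMem hB] using
    congrArg Complex.re (sum_addCharSum_mul_conj hψ B {0})

theorem sum_re_sq_add_sum_im_sq_addCharSum (hψ : ψ.IsPrimitive) (B : Finset R) :
    ∑ z, (addCharSum ψ B z).re ^ 2 + ∑ z, (addCharSum ψ B z).im ^ 2 = Fintype.card R * #B := by
  classical
  rw [← sum_add_distrib]
  simpa [sq] using congrArg Complex.re (sum_addCharSum_mul_conj hψ B B)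

theorem sum_re_sq_addCharSum_eq_sum_im_sq [DecidableEq R] (hψ : ψ.IsPrimitive)
    (hB : Disjoint B (-B)) :
    ∑ z, (addCharSum ψ B z).re ^ 2 = ∑ z, (addCharSum ψ B z).im ^ 2 := by
  rw [← sub_eq_zero, ← sum_sub_distrib]
  simpa [sq, addCharSum_neg_left, disjoint_iff_inter_eq_empty.mp hB] using
    congrArg Complex.re (sum_addCharSum_mul_conj hψ B (-B))

theorem sum_re_sq_addCharSum [DecidableEq R] (hψ : ψ.IsPrimitive) (hB : Disjoint B (-B)) :
    ∑ z, (addCharSum ψ B z).re ^ 2 = Fintype.card R * #B / 2 := by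
  linarith [sum_re_sq_add_sum_im_sq_addCharSum hψ B, sum_re_sq_addCharSum_eq_sum_im_sq hψ hB]

theorem sum_im_sq_addCharSum [DecidableEq R] (hψ : ψ.IsPrimitive) (hB : Disjoint B (-B)) :
    ∑ z, (addCharSum ψ B z).im ^ 2 = Fintype.card R * #B / 2 := by
  rw [← sum_re_sq_addCharSum_eq_sum_im_sq hψ hB, sum_re_sq_addCharSum hψ hB]

end Moments

theorem card_eq_card_mul_index_add_one {F : Type*} [GroupWithZero F] [Fintype F]
    (A : Subgroup Fˣ) : Fintype.card F = Nat.card A * A.index + 1 := by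
  rw [A.card_mul_index, ← Nat.card_eq_fintype_card, Nat.card_eq_card_units_add_one]

section SubgroupSums

variable {F : Type*} [Field F] {A : Subgroup Fˣ} [Fintype A]

theorem re_addCharSum_of_mem_signedOrbit [Finite F] [DecidableEq F] (ψ : AddChar F ℂ) {x y : F}
    (hy : y ∈ signedOrbit A x) :
    (addCharSum ψ (unitsFinset A) y).re = (addCharSum ψ (unitsFinset A) x).re := by
  obtain ⟨a, ha, rfl | rfl⟩ := mem_signedOrbit.mp hy <;>
    simp [addCharSum_neg_right, addCharSum_unitsFinset_mul_of_mem ψ ha]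

theorem im_sq_addCharSum_of_mem_signedOrbit [Finite F] [DecidableEq F] (ψ : AddChar F ℂ) {x y : F}
    (hy : y ∈ signedOrbit A x) :
    (addCharSum ψ (unitsFinset A) y).im ^ 2 = (addCharSum ψ (unitsFinset A) x).im ^ 2 := by
  obtain ⟨a, ha, rfl | rfl⟩ := mem_signedOrbit.mp hy <;>
    simp [addCharSum_neg_right, addCharSum_unitsFinset_mul_of_mem ψ ha]

variable [Fintype F] {ψ : AddChar F ℂ} {x : F}

theorem im_sq_addCharSum_le (hψ : ψ.IsPrimitive) (hA : -1 ∉ A) (hx : x ≠ 0) :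
    (addCharSum ψ (unitsFinset A) x).im ^ 2 ≤ Fintype.card F / 4 := by
  classical
  set S := addCharSum ψ (unitsFinset A)
  have card_pos : (0 : ℝ) < Nat.card A := mod_cast Nat.card_pos
  have mass_le : 2 * Nat.card A * (S x).im ^ 2 ≤ Fintype.card F * Nat.card A / 2 :=
    calc 2 * Nat.card A * (S x).im ^ 2
        = ∑ z ∈ signedOrbit A x, (S z).im ^ 2 := by
          rw [sum_congr rfl fun z hz ↦ im_sq_addCharSum_of_mem_signedOrbit ψ hz, sum_const,
            card_signedOrbit hA hx]
          simp [S]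
      _ ≤ ∑ z, (S z).im ^ 2 :=
          sum_le_sum_of_subset_of_nonneg (subset_univ _) fun _ _ _ ↦ sq_nonneg _
      _ = Fintype.card F * Nat.card A / 2 := by
          rw [sum_im_sq_addCharSum hψ (disjoint_neg_unitsFinset hA), card_unitsFinset]
  refine le_of_mul_le_mul_left ?_ card_pos
  linarith

theorem sq_index_mul_re_addCharSum_add_one_le (hψ : ψ.IsPrimitive) (hA : -1 ∉ A) (hx : x ≠ 0) :
    (A.index * (addCharSum ψ (unitsFinset A) x).re + 1) ^ 2 ≤
      (A.index / 2 - 1 : ℝ) ^ 2 * Fintype.card F := by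
  classical
  set S := addCharSum ψ (unitsFinset A)
  have card_pos : (0 : ℝ) < Nat.card A := mod_cast Nat.card_pos
  have card_F : (Fintype.card F : ℝ) = Nat.card A * A.index + 1 :=
    mod_cast card_eq_card_mul_index_add_one A
  set m : ℝ := (Nat.card A : ℝ) with hm
  set κ : ℝ := (A.index : ℝ)
  have S_zero : (S 0).re = m := by simp [S, addCharSum_zero_right, card_unitsFinset, hm]
  have card_nonzero : (#(univ.erase (0 : F)) : ℝ) = m * κ := by
    rw [cast_card_erase_of_mem (mem_univ _), card_univ, card_F, add_sub_cancel_right]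
  have sum_nonzero : ∑ z ∈ univ.erase 0, (S z).re = -m := by
    rw [sum_erase_eq_sub (mem_univ _), sum_re_addCharSum hψ (zero_notMem_unitsFinset A), S_zero,
      zero_sub]
  have sum_sq_nonzero :
      ∑ z ∈ univ.erase 0, (S z).re ^ 2 = Fintype.card F * m / 2 - m ^ 2 := by
    rw [sum_erase_eq_sub (mem_univ _), sum_re_sq_addCharSum hψ (disjoint_neg_unitsFinset hA),
      S_zero, card_unitsFinset]
  have samuelson := card_mul_sq_card_mul_sub_sum_le
    (subset_erase.mpr ⟨subset_univ _, zero_notMem_signedOrbit hx⟩)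
    fun z hz ↦ re_addCharSum_of_mem_signedOrbit (A := A) ψ hz
  rw [card_signedOrbit hA hx, card_nonzero, sum_nonzero, sum_sq_nonzero, Nat.cast_mul,
    ← hm, card_F] at samuelson
  rw [card_F]
  refine le_of_mul_le_mul_left ?_ (by positivity : 0 < 2 * m ^ 3)
  push_cast at samuelson
  linarith

theorem sq_index_mul_norm_addCharSum_le (hψ : ψ.IsPrimitive) (hA : -1 ∉ A) (hx : x ≠ 0) :
    (A.index * ‖addCharSum ψ (unitsFinset A) x‖) ^ 2 ≤
      (1 + (A.index / 2 - 1 : ℝ) * √(Fintype.card F)) ^ 2 +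
        (A.index / 2 : ℝ) ^ 2 * √(Fintype.card F) ^ 2 := by
  set s := addCharSum ψ (unitsFinset A) x
  have ne_top : A ≠ ⊤ := fun h ↦ hA (h ▸ Subgroup.mem_top _)
  have two_le : (2 : ℝ) ≤ A.index := mod_cast Subgroup.one_lt_index_of_ne_top ne_top
  set κ : ℝ := (A.index : ℝ)
  have sq_sqrt : √(Fintype.card F : ℝ) ^ 2 = Fintype.card F := Real.sq_sqrt (Nat.cast_nonneg _)
  have bound_nonneg : 0 ≤ (κ / 2 - 1) * √(Fintype.card F) :=
    mul_nonneg (by linarith) (Real.sqrt_nonneg _)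
  have abs_re_add_one_le : |κ * s.re + 1| ≤ (κ / 2 - 1) * √(Fintype.card F) := by
    refine abs_le_of_sq_le_sq ?_ bound_nonneg
    rw [mul_pow, sq_sqrt]
    exact sq_index_mul_re_addCharSum_add_one_le hψ hA hx
  have re_sq_le : (κ * s.re) ^ 2 ≤ (1 + (κ / 2 - 1) * √(Fintype.card F)) ^ 2 := by
    obtain ⟨lower, upper⟩ := abs_le.mp abs_re_add_one_le
    exact sq_le_sq' (by linarith) (by linarith)
  have im_sq_le : (κ * s.im) ^ 2 ≤ (κ / 2) ^ 2 * √(Fintype.card F) ^ 2 :=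
    calc (κ * s.im) ^ 2 = κ ^ 2 * s.im ^ 2 := mul_pow _ _ _
      _ ≤ κ ^ 2 * (Fintype.card F / 4) := by
          gcongr
          exact im_sq_addCharSum_le hψ hA hx
      _ = (κ / 2) ^ 2 * √(Fintype.card F) ^ 2 := by rw [sq_sqrt]; ring
  calc (κ * ‖s‖) ^ 2 = (κ * s.re) ^ 2 + (κ * s.im) ^ 2 := by
        rw [mul_pow, Complex.sq_norm, Complex.normSq_apply]; ring
    _ ≤ _ := add_le_add re_sq_le im_sq_le

end SubgroupSums

section TraceCharacter

theorem isPrimitive_compAddMonoidHom_trace {K L M : Type*} [Field K] [Field L] [Algebra K L]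
    [FiniteDimensional K L] [Algebra.IsSeparable K L] [CommMonoid M] {χ : AddChar K M}
    (hχ : χ ≠ 1) :
    (χ.compAddMonoidHom (Algebra.trace K L).toAddMonoidHom).IsPrimitive := by
  obtain ⟨k, hk⟩ := AddChar.ne_one_iff.mp hχ
  obtain ⟨y, rfl⟩ := Algebra.trace_surjective K L k
  exact .of_ne_one <| AddChar.ne_one_iff.mpr ⟨y, hk⟩

theorem exp_pow_val_eq_stdAddChar {N : ℕ} [NeZero N] (j : ZMod N) :
    Complex.exp (2 * Real.pi * Complex.I / N) ^ j.val = ZMod.stdAddChar j := by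
  rw [← Complex.exp_nat_mul]
  conv_rhs => rw [← ZMod.natCast_zmod_val j, ← Int.cast_natCast, ZMod.stdAddChar_coe]
  push_cast
  ring_nf

variable (p : ℕ) [Fact p.Prime] (F : Type*) [Field F] [Algebra (ZMod p) F]

/-- The additive character `x ↦ e^{2πi Tr(x)/p}` of an extension `F` of `𝔽_p`. -/
noncomputable def traceAddChar : AddChar F ℂ :=
  ZMod.stdAddChar.compAddMonoidHom (Algebra.trace (ZMod p) F).toAddMonoidHom

theorem isPrimitive_traceAddChar [Finite F] : (traceAddChar p F).IsPrimitive :=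
  isPrimitive_compAddMonoidHom_trace <| by
    simpa using ZMod.isPrimitive_stdAddChar p one_ne_zero

theorem traceCharSum_eq_addCharSum (A : Subgroup Fˣ) [Fintype A] (z : F) :
    traceCharSum p F A z = addCharSum (traceAddChar p F) (unitsFinset A) z := by
  simp only [traceCharSum, addCharSum, sum_unitsFinset, exp_pow_val_eq_stdAddChar]
  rfl

end TraceCharacter

theorem sqrt_one_div_mul_add_one_div {m : ℝ} (hm : 0 < m) (κ : ℝ) :
    √(1 / m * (κ + 1 / m)) = √(m * κ + 1) / m := by
  rw [show 1 / m * (κ + 1 / m) = (m * κ + 1) / m ^ 2 by field_simp, Real.sqrt_div' _ (sq_nonneg m),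
    Real.sqrt_sq hm.le]

/-- Theorem 6 (`p`, `m` odd, finite fields). Let `p` be an odd prime, `n = p^r`, `m` an
odd divisor of `n - 1` with `κ = (n-1)/m`, and `A` the unique subgroup of `𝔽_{p^r}ˣ` of
order `m`. The coherence `μ = max_{x ≠ 0} (1/m)|∑_{a ∈ A} ω^{Tr(ax)}|` satisfies
`μ ≤ (1/κ)√((1/m + (κ/2 - 1)β)² + (κ/2)²β²)` with `β = √((1/m)(κ + 1/m))`. -/
theorem finite_field_frame_coherence_bound_odd (p r : ℕ) [Fact p.Prime] (hp : Odd p)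
    (hr : 0 < r)
    (F : Type*) [Field F] [Fintype F] [Algebra (ZMod p) F]
    (hF : Fintype.card F = p ^ r)
    (m κ : ℕ) (hm_odd : Odd m) (hκ : m * κ = p ^ r - 1)
    (A : Subgroup Fˣ) [Fintype A] (hA : Nat.card A = m) :
    ∀ x : F, x ≠ 0 →
      (1 / (m : ℝ)) * ‖traceCharSum p F A x‖ ≤
        (1 / (κ : ℝ)) * Real.sqrt
          ((1 / (m : ℝ) + ((κ : ℝ) / 2 - 1) *
              Real.sqrt ((1 / (m : ℝ)) * ((κ : ℝ) + 1 / (m : ℝ)))) ^ 2 +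
            ((κ : ℝ) / 2) ^ 2 *
              Real.sqrt ((1 / (m : ℝ)) * ((κ : ℝ) + 1 / (m : ℝ))) ^ 2) := by
  intro x hx
  have char_ne_two : ringChar F ≠ 2 := by
    rw [Ne, FiniteField.even_card_iff_char_two, hF, ← Nat.even_iff, Nat.not_even_iff_odd]
    exact hp.pow
  have neg_one_notMem : -1 ∉ A := neg_one_notMem_of_odd_card
    (mt (congrArg Units.val) (Ring.neg_one_ne_one_of_char_ne_two char_ne_two)) (hA ▸ hm_odd)
  have card_F := card_eq_card_mul_index_add_one A
  obtain rfl : κ = A.index := Nat.eq_of_mul_eq_mul_left hm_odd.pos (by lia)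
  have m_pos : (0 : ℝ) < m := mod_cast hm_odd.pos
  have index_ne_zero : (A.index : ℝ) ≠ 0 := mod_cast A.index_ne_zero_of_finite
  have bound :=
    sq_index_mul_norm_addCharSum_le (isPrimitive_traceAddChar p F) neg_one_notMem hx
  rw [← traceCharSum_eq_addCharSum, card_F, hA] at bound
  push_cast at bound
  rw [sqrt_one_div_mul_add_one_div m_pos]
  calc 1 / (m : ℝ) * ‖traceCharSum p F A x‖
      = 1 / A.index * (A.index * ‖traceCharSum p F A x‖ / m) := by field_simp
    _ ≤ _ := by
        gcongr
        apply Real.le_sqrt_of_sq_le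
        rw [div_pow, div_le_iff₀ (by positivity)]
        refine bound.trans_eq ?_
        field_simp
end

section
/- Let G be a finite group of order n, and let χ_1, ..., χ_m be the characters of m pairwise non-isomorphic nontrivial irreducible complex representations of G, each of degree d. Then Σ over nonidentity g ∈ G of Σ_{t=1}^m χ_t(g) equals −md; consequently the average coherence ν := (1/(n−1)) · |Σ_{g ≠ 1} (1/(md)) Σ_{t=1}^m χ_t(g)| equals exactly 1/(n−1). Moreover, if n ≥ 2md, then 1/(n−1) ≤ (1/√(md)) · √((n − md)/(md(n − 1))). -/
open Matrix

/-!
The operator `∑ g, ρ g` maps every vector to one fixed by `G`. A nontrivial irreducible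
representation has no nonzero fixed vector, so this operator, and with it its trace `∑ g, χ g`,
vanishes; removing the term `χ 1 = d` leaves `-d`. After squaring, the comparison with the Welch
bound in dimension `k = m d` becomes `k * k ≤ (n - k) * (n - 1)`, where both factors
on the right are at least `k` once `n ≥ 2 k`.
-/

section Invariants

variable {k G V : Type*} [Group G] [AddCommGroup V]

theorem norm_eq_zero_of_invariants_eq_bot [CommRing k] [Module k V] [Fintype G]
    {ρ : Representation k G V} (hρ : ρ.invariants = ⊥) : ρ.norm = 0 := by
  refine LinearMap.ext fun v ↦ ?_
  have hfixed : ρ.norm v ∈ ρ.invariants := fun g ↦ ρ.self_norm_apply g v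
  exact (Submodule.mem_bot k).mp (hρ ▸ hfixed)

variable [Field k] [Module k V] {ρ : Representation k G V}

theorem isIrreducible_of_forall_submodule [Nontrivial V]
    (h : ∀ W : Submodule k V, (∀ g, ∀ v ∈ W, ρ g v ∈ W) → W = ⊥ ∨ W = ⊤) :
    ρ.IsIrreducible where
  exists_pair_ne := ⟨⊥, ⊤, fun hbot ↦ bot_ne_top (congrArg Subrepresentation.toSubmodule hbot)⟩
  eq_bot_or_eq_top W :=
    (h W.toSubmodule W.apply_mem_toSubmodule).imp
      (fun hW ↦ Subrepresentation.ext hW) (fun hW ↦ Subrepresentation.ext hW)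

theorem invariants_eq_bot_of_isIrreducible [ρ.IsIrreducible] (hρ : ¬ ρ.IsTrivial) :
    ρ.invariants = ⊥ := by
  let W : Subrepresentation ρ := ⟨ρ.invariants, fun g v hv ↦ (hv g).symm ▸ hv⟩
  obtain hbot | htop := eq_bot_or_eq_top W
  · exact congrArg Subrepresentation.toSubmodule hbot
  · have hfixed : ρ.invariants = ⊤ := congrArg Subrepresentation.toSubmodule htop
    exact absurd ⟨fun g ↦ LinearMap.ext fun v ↦ (hfixed ▸ Submodule.mem_top :
      v ∈ ρ.invariants) g⟩ hρ

theorem sum_character_eq_zero_of_invariants_eq_bot [Fintype G] (hρ : ρ.invariants = ⊥) :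
    ∑ g, ρ.character g = 0 :=
  calc ∑ g, ρ.character g = LinearMap.trace k V ρ.norm := (map_sum _ _ _).symm
    _ = 0 := by rw [norm_eq_zero_of_invariants_eq_bot hρ, map_zero]

theorem sum_ne_one_character_of_invariants_eq_bot [Fintype G] [DecidableEq G]
    [FiniteDimensional k V] (hρ : ρ.invariants = ⊥) :
    ∑ g with g ≠ 1, ρ.character g = -(Module.finrank k V : k) := by
  rw [Finset.filter_ne', Finset.sum_erase_eq_sub (Finset.mem_univ 1),
    sum_character_eq_zero_of_invariants_eq_bot hρ, ρ.char_one, zero_sub]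

end Invariants

section MatrixRepresentation

theorem nonempty_of_matrix_ne {n n' α : Type*} {A B : Matrix n n' α} (h : A ≠ B) : Nonempty n :=
  not_isEmpty_iff.mp fun _ ↦ h (Subsingleton.elim A B)

variable {k G n : Type*} [Group G] [Field k] [Fintype n] [DecidableEq n]

/-- The representation on column vectors given by a homomorphism into square matrices; it
translates matrix representations into Mathlib's `Representation`. -/
def matrixRepresentation (A : G →* Matrix n n k) : Representation k G (n → k) :=
  (toLinAlgEquiv' : Matrix n n k ≃ₐ[k] _).toMulEquiv.toMonoidHom.comp A

theorem character_matrixRepresentation (A : G →* Matrix n n k) (g : G) :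
    (matrixRepresentation A).character g = (A g).trace :=
  trace_toLin'_eq (A g)

theorem invariants_matrixRepresentation_eq_bot {A : G →* Matrix n n k}
    (hirr : ∀ W : Submodule k (n → k), (∀ g, ∀ v ∈ W, A g *ᵥ v ∈ W) → W = ⊥ ∨ W = ⊤)
    (hnontriv : ∃ g, A g ≠ 1) : (matrixRepresentation A).invariants = ⊥ := by
  obtain ⟨g, hg⟩ := hnontriv
  have : Nonempty n := nonempty_of_matrix_ne hg
  have : (matrixRepresentation A).IsIrreducible := isIrreducible_of_forall_submodule hirr
  refine invariants_eq_bot_of_isIrreducible fun htriv ↦ hg ?_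
  exact (toLinAlgEquiv' : Matrix n n k ≃ₐ[k] _).injective ((htriv.out g).trans (map_one _).symm)

end MatrixRepresentation

section Coherence

/-- The Welch lower bound on the worst-case coherence of `n` unit vectors in dimension `k`. Both
parameters are real, which keeps truncated subtraction out of the formula. -/
noncomputable def welchBound (n k : ℝ) : ℝ :=
  √((n - k) / (k * (n - 1)))

theorem one_div_sub_one_le_welchBound_iff {n k : ℝ} (hk : 0 < k) (hn : 1 < n) :
    1 / (n - 1) ≤ 1 / √k * welchBound n k ↔ k * k ≤ (n - k) * (n - 1) := by
  have hn' : 0 < n - 1 := sub_pos.mpr hn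
  have hmerge : 1 / √k * welchBound n k = √((n - k) / (k * k * (n - 1))) := by
    rw [welchBound, ← Real.sqrt_one, ← Real.sqrt_div zero_le_one,
      ← Real.sqrt_mul (by positivity), Real.sqrt_one, div_mul_div_comm, one_mul, mul_assoc]
  calc 1 / (n - 1) ≤ 1 / √k * welchBound n k
      ↔ 1 / (n - 1) ^ 2 ≤ (n - k) / (k * k * (n - 1)) := by
        rw [hmerge, Real.le_sqrt' (by positivity), div_pow, one_pow]
    _ ↔ k * k * (n - 1) ≤ (n - k) * (n - 1) * (n - 1) := by
        rw [div_le_div_iff₀ (by positivity) (by positivity), one_mul, sq, mul_assoc (n - k)]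
    _ ↔ k * k ≤ (n - k) * (n - 1) := mul_le_mul_iff_left₀ hn'

variable {𝕜 G ι : Type*} [RCLike 𝕜] [Group G] [Fintype G] [DecidableEq G] [Fintype ι]
  {V : ι → Type*} [∀ t, AddCommGroup (V t)] [∀ t, Module 𝕜 (V t)]

/-- The average coherence `ν` of the group frame built from the representations `ρ t` of common
degree `d`. The inner product of two columns depends only on the group element `g` by which they
differ, so the average over pairs of distinct columns is an average over `g ≠ 1`. -/
noncomputable def averageCoherence (ρ : ∀ t, Representation 𝕜 G (V t)) (d : ℕ) : ℝ :=
  1 / ((Fintype.card G : ℝ) - 1) *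
    ‖∑ g : G with g ≠ 1, 1 / ((Fintype.card ι : 𝕜) * d) * ∑ t, (ρ t).character g‖

variable [∀ t, FiniteDimensional 𝕜 (V t)] {ρ : ∀ t, Representation 𝕜 G (V t)} {d : ℕ}

theorem sum_ne_one_sum_character (hρ : ∀ t, (ρ t).invariants = ⊥)
    (hdim : ∀ t, Module.finrank 𝕜 (V t) = d) :
    ∑ g with g ≠ 1, ∑ t, (ρ t).character g = -((Fintype.card ι : 𝕜) * d) := by
  rw [Finset.sum_comm]
  simp only [sum_ne_one_character_of_invariants_eq_bot (hρ _), hdim, Finset.sum_const,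
    Finset.card_univ, nsmul_eq_mul, mul_neg]

theorem averageCoherence_eq_one_div [Nonempty ι] (hρ : ∀ t, (ρ t).invariants = ⊥)
    (hdim : ∀ t, Module.finrank 𝕜 (V t) = d) (hd : 0 < d) :
    averageCoherence ρ d = 1 / ((Fintype.card G : ℝ) - 1) := by
  have hmd : (Fintype.card ι : 𝕜) * d ≠ 0 := mod_cast (Nat.mul_pos Fintype.card_pos hd).ne'
  rw [averageCoherence, ← Finset.mul_sum, sum_ne_one_sum_character hρ hdim, mul_neg,
    one_div_mul_cancel hmd, norm_neg, norm_one, mul_one]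

theorem group_frame_average_coherence_general [Nonempty ι] (hρ : ∀ t, (ρ t).invariants = ⊥)
    (hdim : ∀ t, Module.finrank 𝕜 (V t) = d) (hd : 0 < d) :
    ∑ g with g ≠ 1, ∑ t, (ρ t).character g = -((Fintype.card ι : 𝕜) * d) ∧
    averageCoherence ρ d = 1 / ((Fintype.card G : ℝ) - 1) ∧
    (2 * Fintype.card ι * d ≤ Fintype.card G →
      1 / ((Fintype.card G : ℝ) - 1) ≤
        1 / √(Fintype.card ι * d) * welchBound (Fintype.card G) (Fintype.card ι * d)) := by
  refine ⟨sum_ne_one_sum_character hρ hdim, averageCoherence_eq_one_div hρ hdim hd, fun h ↦ ?_⟩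
  have hmd : (1 : ℝ) ≤ Fintype.card ι * d := mod_cast Nat.mul_pos Fintype.card_pos hd
  have hcard : 2 * (Fintype.card ι * d : ℝ) ≤ Fintype.card G := by
    rw [← mul_assoc]
    exact_mod_cast h
  rw [one_div_sub_one_le_welchBound_iff (by linarith) (by linarith)]
  exact mul_le_mul (by linarith) (by linarith) (by linarith) (by linarith)

end Coherence

/-- Theorem (average coherence of group frames). Let `G` be a finite group of order `n`
and `ρ₁, …, ρ_m` pairwise non-isomorphic nontrivial irreducible complex representations of
`G`, each of degree `d`, with characters `χ_t = Tr ∘ ρ_t`. Then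
`∑_{g ≠ 1} ∑_t χ_t(g) = -m d`, so the average coherence
`ν = (1/(n-1)) |∑_{g ≠ 1} (1/(md)) ∑_t χ_t(g)|` equals `1/(n-1)`; moreover if `n ≥ 2md`
then `1/(n-1) ≤ (1/√(md)) √((n - md)/(md(n-1)))`. -/
theorem group_frame_average_coherence (G : Type*) [Group G] [Fintype G] [DecidableEq G]
    (n : ℕ) (hn : Fintype.card G = n) (m d : ℕ) (hm : 0 < m)
    (ρ : Fin m → (G →* Matrix (Fin d) (Fin d) ℂ))
    (hirr : ∀ t : Fin m, ∀ W : Submodule ℂ (Fin d → ℂ),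
      (∀ g : G, ∀ v ∈ W, (ρ t g).mulVec v ∈ W) → W = ⊥ ∨ W = ⊤)
    (hnontriv : ∀ t : Fin m, ∃ g : G, ρ t g ≠ 1)
    (hnoniso : ∀ t s : Fin m, t ≠ s →
      ¬ ∃ T : Matrix (Fin d) (Fin d) ℂ, IsUnit T ∧ ∀ g : G, T * ρ t g = ρ s g * T) :
    (∑ g ∈ Finset.univ.filter (fun g : G => g ≠ 1), ∑ t : Fin m, (ρ t g).trace
      = -((m : ℂ) * (d : ℂ))) ∧
    ((1 / ((n : ℝ) - 1)) *
        ‖∑ g ∈ Finset.univ.filter (fun g : G => g ≠ 1),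
            (1 / ((m : ℂ) * (d : ℂ))) * ∑ t : Fin m, (ρ t g).trace‖
      = 1 / ((n : ℝ) - 1)) ∧
    (2 * m * d ≤ n →
      1 / ((n : ℝ) - 1) ≤
        (1 / Real.sqrt ((m : ℝ) * d)) *
          Real.sqrt (((n : ℝ) - (m : ℝ) * d) / (((m : ℝ) * d) * ((n : ℝ) - 1)))) := by
  subst hn
  have : Nonempty (Fin m) := ⟨⟨0, hm⟩⟩
  have hd : 0 < d := Fin.pos_iff_nonempty.mpr (nonempty_of_matrix_ne (hnontriv ⟨0, hm⟩).choose_spec)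
  simpa only [averageCoherence, welchBound, character_matrixRepresentation, Fintype.card_fin] using
    group_frame_average_coherence_general (ρ := fun t ↦ matrixRepresentation (ρ t))
      (fun t ↦ invariants_matrixRepresentation_eq_bot (hirr t) (hnontriv t))
      (fun _ ↦ Module.finrank_fin_fun ℂ) hd
end
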